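/- Suppose Algorithm 1 is run on an on-line P_9-free bipartite graph G and the largest color index of a color it uses is k ≥ 2. Then Algorithm 1 uses at most 3k colors on G, the graph G contains X_{⌊√(k/2)⌋} as an induced subgraph, and consequently the on-line chromatic number of G satisfies χ*(G) ≥ ⌊√(k/2)⌋. -/

import Mathlib

/-! ### P_n-free graphs -/

/-- `f` lists the vertices of an induced path on `n` vertices in `G`. -/
def IsInducedPath {V : Type*} (G : SimpleGraph V) (n : ℕ) (f : Fin n → V) : Prop :=
  Function.Injective f ∧
    ∀ a b : Fin n, G.Adj (f a) (f b) ↔ (a.val + 1 = b.val ∨ b.val + 1 = a.val)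

/-- `G` contains no induced path on `n` vertices. -/
def PFree {V : Type*} (G : SimpleGraph V) (n : ℕ) : Prop :=
  ¬ ∃ f : Fin n → V, IsInducedPath G n f

/-! ### The graphs `X_k` -/

/-- Vertex set of the graph `X_k` (with a junk value at `k = 0`). -/
def XV : ℕ → Type
  | 0 => PUnit
  | 1 => PUnit
  | 2 => Bool
  | (n+3) => Option (XV (n+2) ⊕ XV (n+2))

/-- The root of `X_k`. -/
def XRoot : (k : ℕ) → XV k
  | 0 => PUnit.unit
  | 1 => PUnit.unit
  | 2 => true
  | (_+3) => none

/-- The side of a vertex of `X_k`: `true` is the root side, `false` the non-root side. -/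
def XSide : (k : ℕ) → XV k → Bool
  | 0, _ => true
  | 1, _ => true
  | 2, v => v
  | (_+3), none => true
  | (n+3), some (Sum.inl x) => !(XSide (n+2) x)
  | (n+3), some (Sum.inr x) => XSide (n+2) x

/-- Base adjacency relation of `X_k`:  for `k ≥ 3`, `X_k` consists of two disjoint copies of
`X_{k-1}` with no edges in between, together with a root vertex joined to the root side of the
first copy and to the non-root side of the second copy. -/
def XRel : (k : ℕ) → XV k → XV k → Prop
  | 0, _, _ => False
  | 1, _, _ => False
  | 2, u, v => u ≠ v
  | (n+3), none, some (Sum.inl x) => XSide (n+2) x = true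
  | (n+3), none, some (Sum.inr x) => XSide (n+2) x = false
  | (n+3), some (Sum.inl x), none => XSide (n+2) x = true
  | (n+3), some (Sum.inr x), none => XSide (n+2) x = false
  | (n+3), some (Sum.inl x), some (Sum.inl y) => XRel (n+2) x y
  | (n+3), some (Sum.inr x), some (Sum.inr y) => XRel (n+2) x y
  | (_+3), _, _ => False

/-- The graph `X_k`. -/
def XGraph (k : ℕ) : SimpleGraph (XV k) := SimpleGraph.fromRel (XRel k)

/-! ### On-line coloring algorithms and the on-line chromatic number -/

/-- A (deterministic) on-line coloring algorithm: upon presentation of the `(k+1)`-st vertex it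
sees the induced subgraph on the first `k+1` vertices in order of presentation (modelled as a
graph on `Fin (k+1)`, the new vertex being the last one) and it outputs the color of the new
vertex. -/
def OnlineAlg : Type := (k : ℕ) → SimpleGraph (Fin (k + 1)) → ℕ

/-- The color that algorithm `A` assigns to the `i`-th presented vertex of the on-line graph
`G` (vertices presented in the order `0, 1, 2, …` of `Fin n`). -/
def runColor (A : OnlineAlg) {n : ℕ} (G : SimpleGraph (Fin n)) (i : Fin n) : ℕ :=
  A i.val (G.comap (Fin.castLE i.isLt))

/-- An on-line algorithm is required to always produce a proper coloring. -/
def IsProperAlg (A : OnlineAlg) : Prop :=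
  ∀ (n : ℕ) (G : SimpleGraph (Fin n)) (i j : Fin n),
    G.Adj i j → runColor A G i ≠ runColor A G j

/-- The number of colors that `A` uses on the on-line graph `G`. -/
def numColors (A : OnlineAlg) {n : ℕ} (G : SimpleGraph (Fin n)) : ℕ :=
  (Finset.univ.image (runColor A G)).card

/-- The on-line chromatic number of a finite graph `G`:
`χ*(G) = inf_A max_π A(G,π)`, the infimum over all proper on-line algorithms of the maximum
over all enumerations `π` of the vertices of `G` of the number of colors used. -/
noncomputable def onlineChrom (V : Type) [Fintype V] (G : SimpleGraph V) : ℕ :=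
  sInf { m : ℕ | ∃ A : OnlineAlg, IsProperAlg A ∧
          ∀ (n : ℕ) (π : Fin n ≃ V), numColors A (G.comap π) ≤ m }

/-! ### Algorithm 1 -/

/-- The three palettes of colors `a_i`, `b_i`, `c_i` used by Algorithm 1. -/
inductive PalColor : Type
  | a : ℕ → PalColor
  | b : ℕ → PalColor
  | c : ℕ → PalColor
  deriving DecidableEq

/-- The index of a color. -/
def PalColor.index : PalColor → ℕ
  | a i => i
  | b i => i
  | c i => i

/-- A vertex `u` has color index `j` when its color is `a_j` or `b_j`. -/
def hasColorIndex (col : ℕ → PalColor) (u j : ℕ) : Prop :=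
  col u = PalColor.a j ∨ col u = PalColor.b j

/-- Vertex set of `G_i[u]` at time `t` (vertices are presented in the order `0, 1, 2, …`):
the vertices presented before time `t` whose color has index between `1` and `i`,
together with `u`. -/
def domSet (col : ℕ → PalColor) (t i u : ℕ) : Set ℕ :=
  {w | (w < t ∧ 1 ≤ (col w).index ∧ (col w).index ≤ i) ∨ w = u}

/-- `x` and `y` are connected within the subgraph of `G` induced on `S`. -/
def ReachIn (G : SimpleGraph ℕ) (S : Set ℕ) (x y : ℕ) : Prop :=
  ∃ (hx : x ∈ S) (hy : y ∈ S), (G.induce S).Reachable ⟨x, hx⟩ ⟨y, hy⟩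

/-- `x` and `y` are joined by a walk of even length within the subgraph of `G` induced on `S`;
in a bipartite graph this says exactly that `x` and `y` are on the same side of their
(common) connected component. -/
def EvenReachIn (G : SimpleGraph ℕ) (S : Set ℕ) (x y : ℕ) : Prop :=
  ∃ (hx : x ∈ S) (hy : y ∈ S) (p : (G.induce S).Walk ⟨x, hx⟩ ⟨y, hy⟩), Even p.length

/-- `C_i[u]` at time `t`: the connected component of `u` in the subgraph induced on
`domSet col t i u`. -/
def comp (G : SimpleGraph ℕ) (col : ℕ → PalColor) (t i u : ℕ) : Set ℕ :=
  {w | ReachIn G (domSet col t i u) u w}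

/-- `C_i^y(u)` at time `t`: the connected component of `y` in `C_i(u) = C_i[u] \ {u}`. -/
def compMinus (G : SimpleGraph ℕ) (col : ℕ → PalColor) (t i u y : ℕ) : Set ℕ :=
  {w | ReachIn G (domSet col t i u \ {u}) y w}

/-- Color `a_i` is mixed in `C_i[t]` at time `t`: vertices on both sides of `C_i[t]`
have color `a_i`. -/
def MixedA (G : SimpleGraph ℕ) (col : ℕ → PalColor) (t i : ℕ) : Prop :=
  ∃ x ∈ comp G col t i t, ∃ y ∈ comp G col t i t,
    col x = PalColor.a i ∧ col y = PalColor.a i ∧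
    ¬ EvenReachIn G (domSet col t i t) x y

/-- `m = max {i ≥ 1 | a_i is mixed in C_i[t]} + 1` (with `max ∅ = 0`). -/
noncomputable def mIdx (G : SimpleGraph ℕ) (col : ℕ → PalColor) (t : ℕ) : ℕ :=
  sSup {i | 1 ≤ i ∧ MixedA G col t i} + 1

/-- `u'` is universal to `C_{j-1}[u]` (at time `t`): `u'` is adjacent to all vertices in one of
the two sides of `C_{j-1}[u]`. -/
def UnivTo (G : SimpleGraph ℕ) (col : ℕ → PalColor) (t j u u' : ℕ) : Prop :=
  (∀ x ∈ comp G col t (j-1) u, EvenReachIn G (domSet col t (j-1) u) u x → G.Adj u' x) ∨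
  (∀ x ∈ comp G col t (j-1) u, ¬ EvenReachIn G (domSet col t (j-1) u) u x → G.Adj u' x)

open Classical in
/-- One step of Algorithm 1: the color given to the vertex presented at time `t`, assuming that
`col` records the colors of the previously presented vertices `0, …, t-1`. -/
noncomputable def step (G : SimpleGraph ℕ) (col : ℕ → PalColor) (t : ℕ) : PalColor :=
  let m := mIdx G col t
  let S := domSet col t m t
  let C := comp G col t m t
  let I1 : Set ℕ := {x ∈ C | EvenReachIn G S t x}
  let I2 : Set ℕ := {x ∈ C | ¬ EvenReachIn G S t x}
  if ∃ u ∈ I2, col u = PalColor.a m then PalColor.b m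
  else if ∃ u ∈ I2, col u = PalColor.c m then PalColor.a m
  else if ∃ u ∈ I1 ∪ I2, ∃ u' ∈ I2, ∃ j : ℕ, hasColorIndex col u j ∧
      ((m : ℝ) - Real.sqrt (2 * m) + 2 ≤ (j : ℝ)) ∧ UnivTo G col t j u u'
    then PalColor.c m
  else PalColor.a m

/-- The colors of the first `k` presented vertices under Algorithm 1 (junk elsewhere). -/
noncomputable def algoColAux (G : SimpleGraph ℕ) : ℕ → ℕ → PalColor
  | 0 => fun _ => PalColor.a 0
  | (k+1) => fun w => if w = k then step G (algoColAux G k) k else algoColAux G k w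

/-- `algoCol G v` is the color that Algorithm 1 assigns to vertex `v` when the on-line graph `G`
is presented in the vertex order `0, 1, 2, …`. -/
noncomputable def algoCol (G : SimpleGraph ℕ) (v : ℕ) : PalColor :=
  algoColAux G (v + 1) v

/-- The on-line graph on `ℕ` obtained by presenting the vertices of `G` in the order given by
the enumeration `π` (vertices `≥ n` are isolated). -/
def toNatGraph {V : Type*} (G : SimpleGraph V) {n : ℕ} (π : Fin n ≃ V) : SimpleGraph ℕ :=
  SimpleGraph.fromRel (fun i j => ∃ (hi : i < n) (hj : j < n), G.Adj (π ⟨i, hi⟩) (π ⟨j, hj⟩))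

/-!
When Algorithm 1 gives a vertex `v` the index `j + 1`, the color `a_j` becomes mixed because `v`
merges components of the graph of earlier vertices of index at most `j`, two of which contain
vertices of color `a_j` on opposite sides. In a `P_9`-free graph no vertex ends an induced `P_5` in
each of the two, so from every vertex `u` of index at least 2 we may descend to a component in which
`u` ends no induced `P_5`; there `u` sees every vertex `z` of index at least 2 on the other side,
unless some vertex is universal to the component of smaller index that arose with `z`. Hence, in the
absence of such universal vertices, every second step down in the index gives two copies of the
current `X_k` with `u` as a root joining them, and the `√(2 * m)` indices from `m` down to the threshold
`m - √(2 * m) + 2` leave room for about `√(m / 2)` such steps. A universal vertex of index above the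
threshold instead joins two copies of `X_{k-1}` obtained at that index by induction, and the colors
`c_m` make sure that it lies on the right side of the bipartition.

For the on-line bound, an adversary presents copies of `X_k` until two of them show at least `k`
colors on the vertices that a root joining them must be adjacent to, and then presents that root.
-/

/-! ### Connectivity inside a vertex set -/

namespace ReachIn

variable {G : SimpleGraph ℕ} {S T : Set ℕ} {x y z : ℕ}

theorem left_mem (h : ReachIn G S x y) : x ∈ S := h.1

theorem right_mem (h : ReachIn G S x y) : y ∈ S := h.2.1

theorem refl (hx : x ∈ S) : ReachIn G S x x := ⟨hx, hx, SimpleGraph.Reachable.rfl⟩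

theorem symm : ReachIn G S x y → ReachIn G S y x
  | ⟨hx, hy, h⟩ => ⟨hy, hx, h.symm⟩

theorem trans : ReachIn G S x y → ReachIn G S y z → ReachIn G S x z
  | ⟨hx, _, h⟩, ⟨_, hz, h'⟩ => ⟨hx, hz, h.trans h'⟩

theorem of_adj (hx : x ∈ S) (hy : y ∈ S) (h : G.Adj x y) : ReachIn G S x y :=
  ⟨hx, hy, SimpleGraph.Adj.reachable (G := G.induce S) h⟩

theorem step (h : ReachIn G S x y) (hz : z ∈ S) (hyz : G.Adj y z) : ReachIn G S x z :=
  h.trans (of_adj h.right_mem hz hyz)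

@[elab_as_elim]
theorem induction {P : ℕ → Prop} (h : ReachIn G S x y) (refl : P x)
    (step : ∀ b c, ReachIn G S x b → c ∈ S → G.Adj b c → P b → P c) : P y := by
  obtain ⟨hx, hy, hxy⟩ := h
  have key (b : S) (hb : Relation.ReflTransGen (G.induce S).Adj ⟨x, hx⟩ b) : P b := by
    induction hb with
    | refl => exact refl
    | @tail b c hxb hbc ih =>
      exact step b c ⟨hx, b.2, (SimpleGraph.reachable_iff_reflTransGen _ _).2 hxb⟩ c.2 hbc ih
  exact key ⟨y, hy⟩ ((SimpleGraph.reachable_iff_reflTransGen _ _).1 hxy)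

theorem mono (hST : S ⊆ T) (h : ReachIn G S x y) : ReachIn G T x y :=
  h.induction (refl (hST h.left_mem)) fun _ _ _ hc hbc ih ↦ ih.step (hST hc) hbc

theorem insert_cases {t : ℕ} (hx : x ∈ S) (h : ReachIn G (insert t S) x y) :
    ReachIn G S x y ∨ ∃ g, G.Adj t g ∧ ReachIn G S x g := by
  refine h.induction (.inl (refl hx)) fun b c _ hc hbc ih ↦ ?_
  rcases ih with hb | hg
  · rcases hc with rfl | hc
    · exact .inr ⟨b, hbc.symm, hb⟩
    · exact .inl (hb.step hc hbc)
  · exact .inr hg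

theorem of_insert {t : ℕ} (h : ReachIn G (insert t S) x y) (hS : ¬ ReachIn G S x y) :
    ReachIn G (insert t S) t x := by
  rcases h.left_mem with rfl | hx
  · exact refl h.left_mem
  · obtain ⟨g, htg, hxg⟩ := (h.insert_cases hx).resolve_left hS
    have hg := hxg.symm.mono (Set.subset_insert t S)
    exact (of_adj (Set.mem_insert t S) hg.left_mem htg).trans hg

end ReachIn

theorem evenReachIn_iff {G : SimpleGraph ℕ} {S : Set ℕ} {x y : ℕ} (side : G.Coloring Bool)
    (h : ReachIn G S x y) : EvenReachIn G S x y ↔ side x = side y := by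
  obtain ⟨hx, hy, ⟨w⟩⟩ := h
  let sideS : (G.induce S).Coloring Bool := side.comp (SimpleGraph.Embedding.induce S).toHom
  have hside (p : (G.induce S).Walk ⟨x, hx⟩ ⟨y, hy⟩) : Even p.length ↔ side x = side y :=
    (sideS.even_length_iff_congr p).trans Bool.eq_iff_iff.symm
  exact ⟨fun ⟨_, _, p, hp⟩ ↦ (hside p).1 hp, fun hxy ↦ ⟨hx, hy, w, (hside w).2 hxy⟩⟩

/-! ### The graphs `X_k` -/

namespace XV

variable {n : ℕ}

/-- The embedding of the first copy of `X_{k-1}` (the one whose root side is joined to the root)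
into the vertices of `X_k`. -/
def inl (x : XV (n + 2)) : XV (n + 3) := (some (Sum.inl x) : Option (XV (n + 2) ⊕ XV (n + 2)))

/-- The embedding of the second copy of `X_{k-1}` (the one whose non-root side is joined to the
root) into the vertices of `X_k`. -/
def inr (x : XV (n + 2)) : XV (n + 3) := (some (Sum.inr x) : Option (XV (n + 2) ⊕ XV (n + 2)))

@[elab_as_elim]
theorem rootCases {P : XV (n + 3) → Prop} (root : P (XRoot (n + 3))) (inl : ∀ x, P (inl x))
    (inr : ∀ x, P (inr x)) : ∀ a, P a
  | none => root
  | some (Sum.inl x) => inl x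
  | some (Sum.inr x) => inr x

/-- The map out of `X_k` given by the image of the root and by its restrictions to the two copies
of `X_{k-1}`. -/
def elim {V : Type*} (r : V) (f g : XV (n + 2) → V) : XV (n + 3) → V
  | none => r
  | some (Sum.inl x) => f x
  | some (Sum.inr x) => g x

theorem exists_iff {P : XV (n + 3) → Prop} :
    (∃ a, P a) ↔ P (XRoot (n + 3)) ∨ (∃ x, P (inl x)) ∨ ∃ x, P (inr x) :=
  Option.exists.trans (or_congr_right Sum.exists)

theorem range_elim {V : Type*} (r : V) (f g : XV (n + 2) → V) :
    Set.range (elim r f g) = insert r (Set.range f ∪ Set.range g) := by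
  ext v
  exact exists_iff.trans (or_congr_left eq_comm)

instance : (k : ℕ) → Fintype (XV k)
  | 0 | 1 => inferInstanceAs (Fintype PUnit)
  | 2 => inferInstanceAs (Fintype Bool)
  | n + 3 =>
    have := instFintype (n + 2)
    inferInstanceAs (Fintype (Option (XV (n + 2) ⊕ XV (n + 2))))

end XV

section XSide

variable {n : ℕ}

theorem XSide_XRoot : ∀ k, XSide k (XRoot k) = true
  | 0 | 1 | 2 | _ + 3 => rfl

theorem XSide_inl (x : XV (n + 2)) : XSide (n + 3) (XV.inl x) = !XSide (n + 2) x := rfl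

theorem XSide_inr (x : XV (n + 2)) : XSide (n + 3) (XV.inr x) = XSide (n + 2) x := rfl

theorem exists_XSide_eq (n : ℕ) : ∀ b, ∃ a : XV (n + 2), XSide (n + 2) a = b := by
  induction n with
  | zero => exact fun b ↦ ⟨b, rfl⟩
  | succ n ih =>
    intro b
    obtain ⟨a, ha⟩ := ih b
    exact ⟨XV.inr a, ha⟩

end XSide

namespace XGraph

variable {n : ℕ} {V : Type*} {H : SimpleGraph V}

theorem two_adj {a b : Bool} : (XGraph 2).Adj a b ↔ a ≠ b := by
  change a ≠ b ∧ (a ≠ b ∨ b ≠ a) ↔ a ≠ b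
  tauto

theorem adj_root_inl {x : XV (n + 2)} :
    (XGraph (n + 3)).Adj (XRoot (n + 3)) (XV.inl x) ↔ XSide (n + 2) x = true :=
  ⟨fun h ↦ h.2.elim id id, fun h ↦ ⟨nofun, .inl h⟩⟩

theorem adj_root_inr {x : XV (n + 2)} :
    (XGraph (n + 3)).Adj (XRoot (n + 3)) (XV.inr x) ↔ XSide (n + 2) x = false :=
  ⟨fun h ↦ h.2.elim id id, fun h ↦ ⟨nofun, .inl h⟩⟩

theorem adj_inl_inl {x y : XV (n + 2)} :
    (XGraph (n + 3)).Adj (XV.inl x) (XV.inl y) ↔ (XGraph (n + 2)).Adj x y :=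
  and_congr_left' ((Option.some_injective _).comp Sum.inl_injective).ne_iff

theorem adj_inr_inr {x y : XV (n + 2)} :
    (XGraph (n + 3)).Adj (XV.inr x) (XV.inr y) ↔ (XGraph (n + 2)).Adj x y :=
  and_congr_left' ((Option.some_injective _).comp Sum.inr_injective).ne_iff

theorem not_adj_inl_inr {x y : XV (n + 2)} : ¬ (XGraph (n + 3)).Adj (XV.inl x) (XV.inr y) :=
  fun h ↦ h.2.elim id id

theorem adj_root_of_XSide_eq_false (n : ℕ) {a : XV (n + 2)} (ha : XSide (n + 2) a = false) :
    (XGraph (n + 2)).Adj (XRoot (n + 2)) a := by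
  cases n with
  | zero => exact two_adj.2 fun h ↦ absurd (h.trans ha) nofun
  | succ n =>
    induction a using XV.rootCases with
    | root => exact absurd ((XSide_XRoot _).symm.trans ha) nofun
    | inl x => exact adj_root_inl.2 (by simpa only [XSide_inl, Bool.not_eq_false'] using ha)
    | inr x => exact adj_root_inr.2 ha

theorem exists_adj (n : ℕ) : ∀ a : XV (n + 2), ∃ b, (XGraph (n + 2)).Adj a b := by
  induction n with
  | zero => exact fun a ↦ ⟨!a, two_adj.2 (Bool.not_ne_self a).symm⟩
  | succ n ih =>
    intro a
    induction a using XV.rootCases with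
    | root =>
      obtain ⟨x, hx⟩ := exists_XSide_eq n true
      exact ⟨_, adj_root_inl.2 hx⟩
    | inl x => exact (ih x).imp' XV.inl fun _ ↦ adj_inl_inl.2
    | inr x => exact (ih x).imp' XV.inr fun _ ↦ adj_inr_inr.2

/-- The copy of `X_2` formed by an edge of `H`, the first endpoint being the root. -/
def edgeEmbedding {x y : V} (h : H.Adj x y) : XGraph 2 ↪g H where
  toFun a := bif (a : Bool) then x else y
  inj' := by
    rintro (_ | _) (_ | _) hab
    exacts [rfl, (h.ne' hab).elim, (h.ne hab).elim, rfl]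
  map_rel_iff' := by
    rintro (_ | _) (_ | _)
    exacts [iff_of_false H.irrefl (XGraph 2).irrefl, iff_of_true h.symm (two_adj.2 nofun),
      iff_of_true h (two_adj.2 nofun), iff_of_false H.irrefl (XGraph 2).irrefl]

/-- The copy of `X_{k+1}` formed by two copies of `X_k` and a root, each placed in `H` with the
required adjacencies. The vertices are then automatically distinct. -/
def joinEmbedding (r : V) (f g : XGraph (n + 2) ↪g H)
    (hf : ∀ x, H.Adj r (f x) ↔ XSide (n + 2) x = true)
    (hg : ∀ x, H.Adj r (g x) ↔ XSide (n + 2) x = false)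
    (hfg : ∀ x y, ¬ H.Adj (f x) (g y)) : XGraph (n + 3) ↪g H where
  toFun := XV.elim r f g
  inj' := by
    have hrf (x) : r ≠ f x := by
      rintro rfl
      obtain ⟨y, hy⟩ := exists_XSide_eq n false
      exact hfg x y ((hg y).2 hy)
    have hrg (x) : r ≠ g x := by
      rintro rfl
      obtain ⟨y, hy⟩ := exists_XSide_eq n true
      exact hfg y x ((hf y).2 hy).symm
    have hne (x y) : f x ≠ g y := by
      obtain ⟨x', hx'⟩ := exists_adj n x
      exact fun h ↦ hfg x' y (h ▸ (f.map_adj_iff.2 hx').symm)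
    rintro (_ | x | x) (_ | y | y) h
    exacts [rfl, (hrf y h).elim, (hrg y h).elim, (hrf x h.symm).elim,
      congrArg XV.inl (f.injective h), (hne x y h).elim, (hrg x h.symm).elim,
      (hne y x h.symm).elim, congrArg XV.inr (g.injective h)]
  map_rel_iff' := by
    rintro (_ | x | x) (_ | y | y)
    exacts [iff_of_false H.irrefl (XGraph _).irrefl, (hf y).trans adj_root_inl.symm,
      (hg y).trans adj_root_inr.symm,
      (H.adj_comm _ _).trans <| ((hf x).trans adj_root_inl.symm).trans ((XGraph _).adj_comm _ _),
      f.map_adj_iff.trans adj_inl_inl.symm, iff_of_false (hfg x y) not_adj_inl_inr,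
      (H.adj_comm _ _).trans <| ((hg x).trans adj_root_inr.symm).trans ((XGraph _).adj_comm _ _),
      iff_of_false (fun h ↦ hfg y x h.symm) (fun h ↦ not_adj_inl_inr h.symm),
      g.map_adj_iff.trans adj_inr_inr.symm]

end XGraph

/-! ### Copies of `X_k` on prescribed sides of a bipartite graph -/

section ContainsX

variable {V : Type*} {G : SimpleGraph V} (side : G.Coloring Bool)

/-- `v` is universal to the vertex set `K`: it is adjacent to all vertices of `K` on the other side
of the bipartition. -/
def CompleteTo (v : V) (K : Set V) : Prop := ∀ x ∈ K, side x ≠ side v → G.Adj v x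

/-- `G` has an induced copy of `X_k` with all vertices in `S` and with the root side on side `b` of
the bipartition. -/
def ContainsX (S : Set V) (k : ℕ) (b : Bool) : Prop :=
  ∃ f : XGraph k ↪g G, ∀ a, f a ∈ S ∧ side (f a) = (XSide k a == b)

variable {side} {S T K L : Set V} {k : ℕ} {b : Bool} {r v : V}

theorem CompleteTo.mono (hKL : K ⊆ L) (h : CompleteTo side v L) : CompleteTo side v K :=
  fun x hx ↦ h x (hKL hx)

theorem CompleteTo.adj_iff (h : CompleteTo side v K) {x : V} (hx : x ∈ K) :
    G.Adj v x ↔ side x ≠ side v :=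
  ⟨fun hvx ↦ (side.valid hvx).symm, h x hx⟩

theorem ContainsX.mono (hST : S ⊆ T) : ContainsX side S k b → ContainsX side T k b
  | ⟨f, hf⟩ => ⟨f, fun a ↦ ⟨hST (hf a).1, (hf a).2⟩⟩

theorem ContainsX.of_le_one (hk : k ≤ 1) (hr : r ∈ S) : ContainsX side S k (side r) := by
  obtain rfl | rfl : k = 0 ∨ k = 1 := by omega
  all_goals
    exact ⟨⟨⟨fun _ ↦ r, fun _ _ _ ↦ rfl⟩, iff_of_false G.irrefl (XGraph _).irrefl⟩,
      fun _ ↦ ⟨hr, (Bool.true_beq _).symm⟩⟩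

theorem ContainsX.join {S : Bool → Set V} (hX : ∀ b, ContainsX side (S b) (k + 1) b)
    (hS : ∀ x ∈ S true, ∀ y ∈ S false, ¬ G.Adj x y) (hr : ∀ b, CompleteTo side r (S b))
    (hST : ∀ b, S b ⊆ T) (hrT : r ∈ T) : ContainsX side T (k + 2) (side r) := by
  have hS' (b) : ∀ x ∈ S (!b), ∀ y ∈ S b, ¬ G.Adj x y := by
    cases b
    exacts [hS, fun x hx y hy h ↦ hS y hy x hx h.symm]
  obtain ⟨f, hf⟩ := hX (!side r)
  obtain ⟨g, hg⟩ := hX (side r)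
  cases k with
  | zero =>
    have hside : side (f PUnit.unit) = !side r := by simpa [XSide] using (hf PUnit.unit).2
    refine ⟨XGraph.edgeEmbedding (hr _ _ (hf PUnit.unit).1 (by simp [hside])), ?_⟩
    rintro (_ | _)
    exacts [⟨hST _ (hf PUnit.unit).1, hside.trans (Bool.false_beq _).symm⟩,
      ⟨hrT, (Bool.true_beq _).symm⟩]
  | succ n =>
    have hrf (x) : G.Adj r (f x) ↔ XSide (n + 2) x = true := by
      rw [(hr _).adj_iff (hf x).1, (hf x).2]
      grind
    have hrg (x) : G.Adj r (g x) ↔ XSide (n + 2) x = false := by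
      rw [(hr _).adj_iff (hg x).1, (hg x).2]
      grind
    refine ⟨XGraph.joinEmbedding r f g hrf hrg fun x y ↦ hS' _ _ (hf x).1 _ (hg y).1, ?_⟩
    intro a
    induction a using XV.rootCases with
    | root => exact ⟨hrT, (Bool.true_beq _).symm⟩
    | inl x =>
      refine ⟨hST _ (hf x).1, (hf x).2.trans ?_⟩
      rw [XSide_inl]
      grind
    | inr x => exact ⟨hST _ (hg x).1, (hg x).2⟩

end ContainsX

/-! ### Induced paths -/

section InducedPath

variable {V : Type*} {G : SimpleGraph V}

theorem IsInducedPath.exists_glue {m n : ℕ} {p : Fin (m + 1) → V} {q : Fin (n + 1) → V}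
    (hp : IsInducedPath G (m + 1) p) (hq : IsInducedPath G (n + 1) q) (h₀ : p 0 = q 0)
    (hpq : ∀ i j, i ≠ 0 → j ≠ 0 → p i ≠ q j ∧ ¬ G.Adj (p i) (q j)) :
    ∃ f, IsInducedPath G (m + n + 1) f := by
  let f (i : Fin (m + n + 1)) : V :=
    if h : i.val ≤ m then p ⟨m - i, by omega⟩ else q ⟨i - m, by omega⟩
  have hf_left (i : Fin (m + n + 1)) (h : i.val ≤ m) : f i = p ⟨m - i, by omega⟩ := dif_pos h
  have hf_right (i : Fin (m + n + 1)) (h : m ≤ i.val) : f i = q ⟨i - m, by omega⟩ := by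
    rcases h.eq_or_lt with h | h
    · rw [hf_left i h.ge]
      simpa only [← h, Nat.sub_self, Fin.mk_zero] using h₀
    · exact dif_neg h.not_ge
  have hf_le (a b : Fin (m + n + 1)) (hab : a ≤ b) : (f a = f b → a = b) ∧
      (G.Adj (f a) (f b) ↔ (a.val + 1 = b.val ∨ b.val + 1 = a.val)) := by
    rcases le_or_gt b.val m with hb | hb
    · rw [hf_left a (by omega), hf_left b hb, hp.1.eq_iff, hp.2]
      simp only [Fin.ext_iff]
      omega
    rcases le_or_gt m a.val with ha | ha
    · rw [hf_right a ha, hf_right b hb.le, hq.1.eq_iff, hq.2]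
      simp only [Fin.ext_iff]
      omega
    · rw [hf_left a ha.le, hf_right b hb.le]
      obtain ⟨hne, hadj⟩ := hpq ⟨m - a, by omega⟩ ⟨b - m, by omega⟩
        (by simp only [ne_eq, Fin.ext_iff, Fin.val_zero]; omega)
        (by simp only [ne_eq, Fin.ext_iff, Fin.val_zero]; omega)
      exact ⟨fun h ↦ (hne h).elim, iff_of_false hadj (by omega)⟩
  refine ⟨f, fun a b hab ↦ ?_, fun a b ↦ ?_⟩ <;> rcases le_total a b with h | h
  · exact (hf_le a b h).1 hab
  · exact ((hf_le b a h).1 hab.symm).symm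
  · exact (hf_le a b h).2
  · exact (G.adj_comm _ _).trans ((hf_le b a h).2.trans or_comm)

/-- `u` is an end of an induced path on five vertices whose other four vertices lie in `F`. -/
def EndsP5 (G : SimpleGraph V) (F : Set V) (u : V) : Prop :=
  ∃ p : Fin 5 → V, IsInducedPath G 5 p ∧ p 0 = u ∧ ∀ i ≠ 0, p i ∈ F

theorem PFree.not_endsP5_of_endsP5 (hP : PFree G 9) {F F' : Set V} {u : V}
    (hdisj : ∀ x ∈ F, ∀ y ∈ F', x ≠ y ∧ ¬ G.Adj x y) (hF : EndsP5 G F u) : ¬ EndsP5 G F' u := by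
  rintro ⟨q, hq, hq0, hqF⟩
  obtain ⟨p, hp, hp0, hpF⟩ := hF
  exact hP (hp.exists_glue hq (hp0.trans hq0.symm) fun i j hi hj ↦
    hdisj _ (hpF i hi) _ (hqF j hj))

theorem bool_eq_of_ne_of_ne {a b c : Bool} (hab : a ≠ b) (hcb : c ≠ b) : a = c := by
  decide +revert

theorem EndsP5.of_adj (side : G.Coloring Bool) {F : Set V} {u q b c e : V} (hq : q ∈ F)
    (hb : b ∈ F) (hc : c ∈ F) (he : e ∈ F) (huq : G.Adj u q) (hqb : G.Adj q b) (hbc : G.Adj b c)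
    (hce : G.Adj c e) (huc : ¬ G.Adj u c) (hqe : ¬ G.Adj q e) : EndsP5 G F u := by
  have hside {x y : V} (h : side x = side y) : ¬ G.Adj x y := fun hxy ↦ side.valid hxy h
  have hside₂ {x y z : V} (hxy : G.Adj x y) (hyz : G.Adj y z) : side x = side z :=
    bool_eq_of_ne_of_ne (side.valid hxy) (side.valid hyz).symm
  have hub : ¬ G.Adj u b := hside (hside₂ huq hqb)
  have hue : ¬ G.Adj u e := hside ((hside₂ huq hqb).trans (hside₂ hbc hce))
  have hqc : ¬ G.Adj q c := hside (hside₂ hqb hbc)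
  have hbe : ¬ G.Adj b e := hside (hside₂ hbc hce)
  have hadj : ∀ i j : Fin 5, G.Adj (![u, q, b, c, e] i) (![u, q, b, c, e] j) ↔
      (i.val + 1 = j.val ∨ j.val + 1 = i.val) := by
    intro i j
    fin_cases i <;> fin_cases j <;>
      simp [huq, hqb, hbc, hce, huq.symm, hqb.symm, hbc.symm, hce.symm, hub, hue, hqc, hbe, huc,
        hqe, G.adj_comm b u, G.adj_comm c u, G.adj_comm c q, G.adj_comm e]
  refine ⟨![u, q, b, c, e], ⟨?_, hadj⟩, rfl, by simp [Fin.forall_fin_succ, *]⟩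
  have htwin (i j : Fin 5) (h : ∀ k : Fin 5, (i.val + 1 = k.val ∨ k.val + 1 = i.val) ↔
      (j.val + 1 = k.val ∨ k.val + 1 = j.val)) : i = j := by decide +revert
  exact fun i j hij ↦ htwin i j fun k ↦ by rw [← hadj, ← hadj, hij]

end InducedPath

/-! ### Neighbourhoods of a vertex that ends no induced `P_5` -/

section Chase

variable {G : SimpleGraph ℕ} (side : G.Coloring Bool) {E S : Set ℕ} {u : ℕ}

theorem exists_adj_of_not_endsP5 {q₀ g : ℕ} (hu : ¬ EndsP5 G E u)
    (hE : ∀ w, ReachIn G S q₀ w → w ∈ E) (huq₀ : G.Adj u q₀) (hg : ReachIn G S q₀ g) :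
    ∃ q, ReachIn G S q₀ q ∧ G.Adj u q ∧ (side g = side u → G.Adj q g) ∧
      (side g ≠ side u → ∀ e ∈ E, G.Adj g e → G.Adj q e) := by
  refine hg.induction ⟨q₀, .refl hg.left_mem, huq₀, fun h ↦ (side.valid huq₀ h.symm).elim,
    fun _ _ _ h ↦ h⟩ ?_
  rintro b c hb hc hbc ⟨q, hq, huq, hqb, hbq⟩
  have hc' := hb.step hc hbc
  have hside := side.valid hbc
  by_cases hcu : side c = side u
  · exact ⟨q, hq, huq, fun _ ↦ hbq (hcu ▸ hside) c (hE c hc') hbc, (absurd hcu ·)⟩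
  by_cases huc : G.Adj u c
  · exact ⟨c, hc', huc, (absurd · hcu), fun _ _ _ h ↦ h⟩
  have hqb := hqb (bool_eq_of_ne_of_ne hside (Ne.symm hcu))
  refine ⟨q, hq, huq, (absurd · hcu), fun _ e he hce ↦ by_contra fun hqe ↦ hu ?_⟩
  exact .of_adj side (hE q hq) (hE b hb) (hE c hc') he huq hqb hbc hce huc hqe

theorem completeTo_of_not_endsP5 {q z : ℕ} (hu : ¬ EndsP5 G E u) (hq : q ∈ E) (huq : G.Adj u q)
    (hS : ∀ x, ReachIn G S z x → x ∈ E ∧ ¬ G.Adj u x) (hz : side z ≠ side u)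
    (hzq : ∀ e ∈ E, G.Adj z e → G.Adj q e) : CompleteTo side q {x | ReachIn G S z x} := by
  have key (x : ℕ) (hx : ReachIn G S z x) : (side x = side u → G.Adj q x) ∧
      (side x ≠ side u → ∀ e ∈ E, G.Adj x e → G.Adj q e) := by
    refine hx.induction ⟨fun h ↦ (hz h).elim, fun _ ↦ hzq⟩ ?_
    intro b c hb hc hbc ih
    have hc' := hb.step hc hbc
    have hside := side.valid hbc
    refine ⟨fun hcu ↦ ih.2 (hcu ▸ hside) c (hS c hc').1 hbc, fun hcu e he hce ↦ ?_⟩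
    have hqb := ih.1 (bool_eq_of_ne_of_ne hside hcu.symm)
    exact by_contra fun hqe ↦ hu <|
      .of_adj side hq (hS b hb).1 (hS c hc').1 he huq hqb hbc hce (hS c hc').2 hqe
  exact fun x hx hxq ↦ (key x hx).1 (bool_eq_of_ne_of_ne hxq (side.valid huq))

end Chase

/-! ### The components built by Algorithm 1 -/

section Algorithm

variable {G : SimpleGraph ℕ} {t t' i i' j m u v x y : ℕ}

theorem algoColAux_of_lt (h : x < t) : algoColAux G t x = algoCol G x := by
  induction t with
  | zero => exact absurd h x.not_lt_zero
  | succ t ih =>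
    rcases Nat.lt_succ_iff_lt_or_eq.1 h with h | rfl
    · exact (if_neg h.ne).trans (ih h)
    · rfl

theorem algoColAux_of_le (h : t ≤ x) : algoColAux G t x = .a 0 := by
  induction t with
  | zero => rfl
  | succ t ih => exact (if_neg (by omega)).trans (ih (by omega))

theorem algoColAux_eq_iff {c : PalColor} (hc : 1 ≤ c.index) :
    algoColAux G t x = c ↔ x < t ∧ algoCol G x = c := by
  rcases lt_or_ge x t with h | h
  · simp only [algoColAux_of_lt h, h, true_and]
  · refine iff_of_false (fun hx ↦ ?_) fun hx ↦ h.not_gt hx.1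
    rw [algoColAux_of_le h] at hx
    exact absurd hc (hx ▸ Nat.not_succ_le_zero 0)

theorem algoCol_eq_step (G : SimpleGraph ℕ) (t : ℕ) : algoCol G t = step G (algoColAux G t) t :=
  if_pos rfl

theorem index_algoCol (G : SimpleGraph ℕ) (t : ℕ) :
    (algoCol G t).index = mIdx G (algoColAux G t) t := by
  rw [algoCol_eq_step]
  unfold step
  simp only
  split_ifs <;> rfl

theorem one_le_index (G : SimpleGraph ℕ) (t : ℕ) : 1 ≤ (algoCol G t).index :=
  (index_algoCol G t).symm ▸ Nat.le_add_left 1 _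

/-- The vertices presented before time `t` whose color has index at most `i`. -/
def presented (G : SimpleGraph ℕ) (t i : ℕ) : Set ℕ := {w | w < t ∧ (algoCol G w).index ≤ i}

/-- The vertex set of the component `C_i[u]` at time `t`, for the coloring of Algorithm 1. -/
def component (G : SimpleGraph ℕ) (t i u : ℕ) : Set ℕ :=
  {w | ReachIn G (insert u (presented G t i)) u w}

theorem presented_mono (ht : t' ≤ t) (hi : i' ≤ i) : presented G t' i' ⊆ presented G t i :=
  fun _ hw ↦ ⟨hw.1.trans_le ht, hw.2.trans hi⟩

theorem presented_succ_of_index_le (h : (algoCol G t).index ≤ i) :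
    presented G (t + 1) i = insert t (presented G t i) := by
  ext w
  simp only [presented, Set.mem_ofPred_eq, Set.mem_insert_iff, Nat.lt_succ_iff_lt_or_eq]
  grind

theorem presented_succ_of_lt_index (h : i < (algoCol G t).index) :
    presented G (t + 1) i = presented G t i := by
  ext w
  simp only [presented, Set.mem_ofPred_eq, Nat.lt_succ_iff_lt_or_eq]
  grind

theorem mem_component_self (G : SimpleGraph ℕ) (t i u : ℕ) : u ∈ component G t i u :=
  .refl (Set.mem_insert _ _)

theorem component_of_mem (hu : u ∈ presented G t i) :
    component G t i u = {w | ReachIn G (presented G t i) u w} := by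
  rw [component, Set.insert_eq_of_mem hu]

theorem component_subset (hu : u ∈ component G t m v) (ht : t' ≤ t) (hi : i ≤ m) :
    component G t' i u ⊆ component G t m v := fun _ hw ↦
  hu.trans <| hw.mono <| Set.insert_subset hu.right_mem <|
    (presented_mono ht hi).trans (Set.subset_insert _ _)

theorem mem_presented_of_mem_component (hu : u ∈ component G t m v) (h : u ≠ v) :
    u ∈ presented G t m := hu.right_mem.resolve_left h

theorem le_of_mem_component (hu : u ∈ component G t m t) : u ≤ t :=
  (eq_or_ne u t).elim le_of_eq fun h ↦ (mem_presented_of_mem_component hu h).1.le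

theorem domSet_algoColAux (G : SimpleGraph ℕ) (t i u : ℕ) :
    domSet (algoColAux G t) t i u = insert u (presented G t i) := by
  ext w
  refine or_comm.trans (or_congr_right (and_congr_right fun hw ↦ ?_))
  simp only [algoColAux_of_lt hw, one_le_index, true_and]

theorem comp_algoColAux (G : SimpleGraph ℕ) (t i u : ℕ) :
    comp G (algoColAux G t) t i u = component G t i u := by
  rw [comp, component, domSet_algoColAux]

section Bipartite

variable (side : G.Coloring Bool)

theorem mixedA_iff (hi : 1 ≤ i) : MixedA G (algoColAux G t) t i ↔
    ∃ x ∈ component G t i t, ∃ y ∈ component G t i t, x < t ∧ y < t ∧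
      algoCol G x = .a i ∧ algoCol G y = .a i ∧ side x ≠ side y := by
  unfold MixedA
  rw [comp_algoColAux, domSet_algoColAux]
  refine exists_congr fun x ↦ and_congr_right fun hx ↦ exists_congr fun y ↦
    and_congr_right fun hy ↦ ?_
  rw [evenReachIn_iff side (hx.symm.trans hy), algoColAux_eq_iff (c := .a i) hi,
    algoColAux_eq_iff (c := .a i) hi]
  tauto

theorem bddAbove_mixedA : BddAbove {i | 1 ≤ i ∧ MixedA G (algoColAux G t) t i} := by
  refine ⟨(Finset.range t).sup fun w ↦ (algoCol G w).index, fun i ⟨hi, hmixed⟩ ↦ ?_⟩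
  obtain ⟨x, -, -, -, hx, -⟩ := hmixed
  obtain ⟨hxt, hx⟩ := (algoColAux_eq_iff (c := .a i) hi).1 hx
  exact (congrArg PalColor.index hx).ge.trans <|
    Finset.le_sup (f := fun w ↦ (algoCol G w).index) (Finset.mem_range.2 hxt)

theorem mixedA_of_index_eq_succ (hj : 1 ≤ j) (ht : (algoCol G t).index = j + 1) :
    MixedA G (algoColAux G t) t j := by
  have hsup : sSup {i | 1 ≤ i ∧ MixedA G (algoColAux G t) t i} = j :=
    Nat.succ_injective ((index_algoCol G t).symm.trans ht)
  refine (hsup ▸ Nat.sSup_mem (Set.nonempty_iff_ne_empty.2 fun hempty ↦ ?_) bddAbove_mixedA :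
    j ∈ {i | 1 ≤ i ∧ MixedA G (algoColAux G t) t i}).2
  rw [hempty, csSup_empty] at hsup
  exact absurd hj (hsup ▸ Nat.not_succ_le_zero 0)

theorem not_mixedA_of_index_le (hi : 1 ≤ i) (ht : (algoCol G t).index ≤ i) :
    ¬ MixedA G (algoColAux G t) t i := fun h ↦
  ((index_algoCol G t).symm.trans_le ht).not_gt <|
    Nat.lt_succ_of_le (le_csSup bddAbove_mixedA ⟨hi, h⟩)

/-- The side `I_2` of `C_i[t]` opposite to the vertex `t` that is being presented. -/
def oppSide (side : G.Coloring Bool) (t i : ℕ) : Set ℕ := {w ∈ component G t i t | side w ≠ side t}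

variable {side}

theorem lt_of_mem_oppSide (hx : x ∈ oppSide side t i) : x < t :=
  (mem_presented_of_mem_component hx.1 (ne_of_apply_ne side hx.2)).1

theorem oppSide_eq (side : G.Coloring Bool) (t i : ℕ) :
    {x ∈ component G t i t | ¬ EvenReachIn G (domSet (algoColAux G t) t i t) t x} =
      oppSide side t i := by
  ext x
  rw [domSet_algoColAux]
  exact and_congr_right fun hx ↦ (evenReachIn_iff side hx).not.trans ne_comm

theorem exists_mem_oppSide_iff {c : PalColor} (hc : 1 ≤ c.index) :
    (∃ x ∈ oppSide side t i, algoColAux G t x = c) ↔ ∃ x ∈ oppSide side t i, algoCol G x = c := by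
  simp only [algoColAux_eq_iff hc]
  exact exists_congr fun x ↦ and_congr_right fun hx ↦ and_iff_right (lt_of_mem_oppSide hx)

theorem exists_mem_component_side_eq (side : G.Coloring Bool) (hj : 1 ≤ j)
    (hu : (algoCol G u).index = j + 1) (hut : u ≤ t) (b : Bool) :
    ∃ x ∈ component G t j u, side x = b := by
  obtain ⟨x, hx, y, hy, -, -, -, -, hxy⟩ :=
    (mixedA_iff side hj).1 (mixedA_of_index_eq_succ hj hu)
  have hsub : component G u j u ⊆ component G t j u :=
    component_subset (mem_component_self G t j u) hut le_rfl
  by_cases hxb : side x = b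
  · exact ⟨x, hsub hx, hxb⟩
  · exact ⟨y, hsub hy, bool_eq_of_ne_of_ne hxy.symm (Ne.symm hxb)⟩

theorem univTo_iff (side : G.Coloring Bool) (hj : 1 ≤ j) (hu : (algoCol G u).index = j + 1)
    (hut : u ≤ t) : UnivTo G (algoColAux G t) t (j + 1) u x ↔
      CompleteTo side x (component G t j u) := by
  have heven : ∀ y ∈ component G t j u,
      (EvenReachIn G (insert u (presented G t j)) u y ↔ side u = side y) :=
    fun _ ↦ evenReachIn_iff side
  unfold UnivTo
  rw [Nat.add_sub_cancel, comp_algoColAux, domSet_algoColAux]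
  refine ⟨fun h y hy hyx ↦ ?_, fun h ↦ ?_⟩
  · rcases h with h | h
    · have hxu := h u (mem_component_self G t j u) ((heven u (mem_component_self G t j u)).2 rfl)
      exact h y hy ((heven y hy).2 (bool_eq_of_ne_of_ne (side.valid hxu).symm hyx))
    · obtain ⟨z, hz, hzu⟩ := exists_mem_component_side_eq side hj hu hut (!side u)
      have huz : side u ≠ side z := fun h ↦ Bool.not_ne_self _ (hzu.symm.trans h.symm)
      have hxz := h z hz ((heven z hz).not.2 huz)
      have hyz := bool_eq_of_ne_of_ne hyx (side.valid hxz).symm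
      exact h y hy ((heven y hy).not.2 (hyz ▸ huz))
  · by_cases hux : side u = side x
    · exact .inr fun y hy huy ↦ h y hy fun hyx ↦ (heven y hy).not.1 huy (hux.trans hyx.symm)
    · exact .inl fun y hy huy ↦ h y hy ((heven y hy).1 huy ▸ hux)

/-- The index that a vertex `u` must have to count in the third rule of Algorithm 1, when the vertex
being presented gets index `m`. -/
noncomputable def threshold (m : ℕ) : ℝ := m - √(2 * m) + 2

theorem one_lt_threshold (m : ℕ) : 1 < threshold m := by
  have h := Real.sq_sqrt (show (0 : ℝ) ≤ 2 * m by positivity)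
  unfold threshold
  nlinarith only [sq_nonneg (√(2 * m) - 1), h]

theorem one_le_of_threshold_le (h : threshold m ≤ (j + 1 : ℕ)) : 1 ≤ j := by
  have : (1 : ℝ) < (j + 1 : ℕ) := (one_lt_threshold m).trans_le h
  exact Nat.lt_succ_iff.1 (Nat.one_lt_cast.1 this)

/-- The condition under which Algorithm 1 gives color `c_m` to the vertex `t` of index `m`, in the
absence of `a_m` and `c_m` on the opposite side. The color index called `j` in the algorithm is
`j + 1` here. -/
def ThirdRule (side : G.Coloring Bool) (t m : ℕ) : Prop :=
  ∃ u ∈ component G t m t, ∃ u' ∈ oppSide side t m, ∃ j, u < t ∧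
    hasColorIndex (algoCol G) u (j + 1) ∧ threshold m ≤ (j + 1 : ℕ) ∧
    CompleteTo side u' (component G t j u)

theorem hasColorIndex.index_eq (h : hasColorIndex (algoCol G) u j) : (algoCol G u).index = j := by
  rcases h with h | h <;> exact congrArg PalColor.index h

theorem hasColorIndex_algoColAux (hj : 1 ≤ j) :
    hasColorIndex (algoColAux G t) u j ↔ u < t ∧ hasColorIndex (algoCol G) u j := by
  simp only [hasColorIndex, algoColAux_eq_iff (c := .a j) hj, algoColAux_eq_iff (c := .b j) hj,
    and_or_left]

theorem thirdRule_iff : (∃ u ∈ component G t m t, ∃ u' ∈ oppSide side t m, ∃ j,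
      hasColorIndex (algoColAux G t) u j ∧ threshold m ≤ j ∧ UnivTo G (algoColAux G t) t j u u') ↔
    ThirdRule side t m := by
  have huniv {u u' j : ℕ} (hut : u < t) (hu : hasColorIndex (algoCol G) u (j + 1))
      (hj : threshold m ≤ (j + 1 : ℕ)) :=
    univTo_iff (x := u') side (one_le_of_threshold_le hj) hu.index_eq hut.le
  refine exists_congr fun u ↦ and_congr_right fun _ ↦ exists_congr fun u' ↦ and_congr_right
    fun _ ↦ ⟨fun ⟨j, hu, hj, h⟩ ↦ ?_, fun ⟨j, hut, hu, hj, h⟩ ↦ ?_⟩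
  · have hj₁ : 1 < j := Nat.one_lt_cast.1 ((one_lt_threshold m).trans_le hj)
    obtain ⟨j, rfl⟩ := Nat.exists_eq_add_of_le' hj₁.le
    obtain ⟨hut, hu⟩ := (hasColorIndex_algoColAux hj₁.le).1 hu
    exact ⟨j, hut, hu, hj, (huniv hut hu hj).1 h⟩
  · exact ⟨j + 1, (hasColorIndex_algoColAux (Nat.le_add_left 1 j)).2 ⟨hut, hu⟩, hj,
      (huniv hut hu hj).2 h⟩

open Classical in
theorem algoCol_eq (side : G.Coloring Bool) (hm : (algoCol G t).index = m) : algoCol G t =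
    if ∃ x ∈ oppSide side t m, algoCol G x = .a m then .b m
    else if ∃ x ∈ oppSide side t m, algoCol G x = .c m then .a m
    else if ThirdRule side t m then .c m else .a m := by
  have h₁ : 1 ≤ m := hm ▸ one_le_index G t
  have hunion (p : ℕ → Prop) (C : Set ℕ) : {x ∈ C | p x} ∪ {x ∈ C | ¬ p x} = C := by
    ext; simp only [Set.mem_union, Set.mem_ofPred_eq]; tauto
  rw [← exists_mem_oppSide_iff (c := .a m) h₁, ← exists_mem_oppSide_iff (c := .c m) h₁,
    ← thirdRule_iff, algoCol_eq_step]
  unfold step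
  simp only [← index_algoCol, hm, comp_algoColAux, hunion]
  simp only [oppSide_eq side, threshold]
  congr

theorem algoCol_ne_a (hx : x ∈ oppSide side t m) (hxm : algoCol G x = .a m) :
    algoCol G t ≠ .a m := by
  intro h
  have := algoCol_eq (m := m) side (congrArg PalColor.index h)
  split_ifs at this <;> simp_all

theorem exists_c_or_not_thirdRule (side : G.Coloring Bool) (h : algoCol G t = .a m) :
    (∃ x ∈ oppSide side t m, algoCol G x = .c m) ∨ ¬ ThirdRule side t m := by
  have := algoCol_eq (m := m) side (congrArg PalColor.index h)
  split_ifs at this <;> simp_all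

theorem exists_a_of_b (side : G.Coloring Bool) (h : algoCol G t = .b m) :
    ∃ x < t, algoCol G x = .a m := by
  have := algoCol_eq (m := m) side (congrArg PalColor.index h)
  split_ifs at this with h_a
  exacts [h_a.imp fun _ ↦ And.imp_left lt_of_mem_oppSide, by simp_all, by simp_all, by simp_all]

theorem thirdRule_of_c (side : G.Coloring Bool) (h : algoCol G t = .c m) : ThirdRule side t m := by
  have := algoCol_eq (m := m) side (congrArg PalColor.index h)
  split_ifs at this <;> simp_all

variable (side)

theorem side_eq_of_mem_component (hm : (algoCol G t).index ≤ m) (hx : x ∈ component G t m t)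
    (hy : y ∈ component G t m t) (hxm : algoCol G x = .a m) (hym : algoCol G y = .a m) :
    side x = side y := by
  have hnew {z : ℕ} (hz : z ∈ component G t m t) (hzm : algoCol G z = .a m)
      (htm : algoCol G t = .a m) : side z = side t :=
    by_contra fun h ↦ algoCol_ne_a ⟨hz, h⟩ hzm htm
  rcases eq_or_ne x t with rfl | hxt
  · exact (hnew hy hym hxm).symm
  rcases eq_or_ne y t with rfl | hyt
  · exact hnew hx hxm hym
  have hi : 1 ≤ m := (one_le_index G x).trans_eq (congrArg PalColor.index hxm)
  by_contra hne
  exact not_mixedA_of_index_le hi hm <| (mixedA_iff side hi).2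
    ⟨x, hx, y, hy, (mem_presented_of_mem_component hx hxt).1,
      (mem_presented_of_mem_component hy hyt).1, hxm, hym, hne⟩

theorem side_eq_of_reachIn_presented (hxy : ReachIn G (presented G t m) x y)
    (hx : algoCol G x = .a m) (hy : algoCol G y = .a m) : side x = side y := by
  induction t with
  | zero => exact absurd hxy.left_mem.1 x.not_lt_zero
  | succ t ih =>
    rcases lt_or_ge m (algoCol G t).index with h | h
    · exact ih (presented_succ_of_lt_index h ▸ hxy)
    rw [presented_succ_of_index_le h] at hxy
    by_cases hxy' : ReachIn G (presented G t m) x y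
    · exact ih hxy'
    have htx := hxy.of_insert hxy'
    exact side_eq_of_mem_component side h htx (htx.trans hxy) hx hy

/-- The vertex `v` of color index `j + 1` sees, on each side `b` of the bipartition, a component of
the graph of earlier vertices of index at most `j` containing a vertex `f b` of color `a_j`, the
two components being distinct. Those are the components whose merging makes `a_j` mixed; they are
considered at a time `t` that may be later than the presentation of `v`. -/
structure MergedPair (side : G.Coloring Bool) (t j v : ℕ) (f : Bool → ℕ) : Prop where
  lt (b : Bool) : f b < v
  color (b : Bool) : algoCol G (f b) = .a j
  side_eq (b : Bool) : side (f b) = b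
  exists_adj (b : Bool) : ∃ g, G.Adj v g ∧ ReachIn G (presented G t j) (f b) g
  not_reachIn : ¬ ReachIn G (presented G t j) (f true) (f false)

theorem exists_mergedPair (hj : 1 ≤ j) (hv : (algoCol G v).index = j + 1) (hvt : v ≤ t) :
    ∃ f, MergedPair side t j v f := by
  obtain ⟨x, hx, y, hy, hxv, hyv, hxj, hyj, hxy⟩ :=
    (mixedA_iff side hj).1 (mixedA_of_index_eq_succ hj hv)
  have hmem {z : ℕ} (hzv : z < v) (hzj : algoCol G z = .a j) : z ∈ presented G v j :=
    ⟨hzv, (congrArg PalColor.index hzj).le⟩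
  have hnot {z w τ : ℕ} (hzj : algoCol G z = .a j) (hwj : algoCol G w = .a j)
      (hzw : side z ≠ side w) : ¬ ReachIn G (presented G τ j) z w := fun h ↦
    hzw (side_eq_of_reachIn_presented side h hzj hwj)
  have hadj {z w : ℕ} (hz : z ∈ presented G v j) (hzw : ReachIn G (insert v (presented G v j)) z w)
      (h : ¬ ReachIn G (presented G v j) z w) :
      ∃ g, G.Adj v g ∧ ReachIn G (presented G t j) z g :=
    ((hzw.insert_cases hz).resolve_left h).imp fun _ ↦
      And.imp_right (.mono (presented_mono hvt le_rfl))
  let f (b : Bool) : ℕ := if side x = b then x else y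
  have hf (b : Bool) : side (f b) = b := by
    by_cases hb : side x = b
    · rw [← hb, show f (side x) = x from if_pos rfl]
    · rw [show f b = y from if_neg hb]
      exact bool_eq_of_ne_of_ne hxy.symm (Ne.symm hb)
  have hfj (b : Bool) : algoCol G (f b) = .a j := by grind
  refine ⟨f, by grind, hfj, hf, fun b ↦ ?_, hnot (hfj _) (hfj _) (by simp [hf])⟩
  by_cases hb : side x = b
  · simp only [f, if_pos hb]
    exact hadj (hmem hxv hxj) (hx.symm.trans hy) (hnot hxj hyj hxy)
  · simp only [f, if_neg hb]
    exact hadj (hmem hyv hyj) (hy.symm.trans hx) (hnot hyj hxj hxy.symm)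

namespace MergedPair

variable {side} {f : Bool → ℕ}

theorem mem_presented (h : MergedPair side t j v f) (b : Bool) : f b ∈ presented G t j :=
  have ⟨_, _, hg⟩ := h.exists_adj b
  hg.left_mem

theorem component_eq (h : MergedPair side t j v f) (b : Bool) :
    component G t j (f b) = {w | ReachIn G (presented G t j) (f b) w} :=
  component_of_mem (h.mem_presented b)

theorem mem_component (h : MergedPair side t j v f) (b : Bool) : f b ∈ component G t j v := by
  obtain ⟨g, hvg, hg⟩ := h.exists_adj b
  have hg := hg.mono (Set.subset_insert v _)
  exact (ReachIn.of_adj (Set.mem_insert v _) hg.right_mem hvg).trans hg.symm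

theorem component_subset_component (h : MergedPair side t j v f) (hji : j ≤ i) (b : Bool) :
    component G t j (f b) ⊆ component G t i v :=
  component_subset (component_subset (mem_component_self G t i v) le_rfl hji
    (h.mem_component b)) le_rfl hji

theorem ne_and_not_adj (h : MergedPair side t j v f) : ∀ x ∈ component G t j (f true),
    ∀ y ∈ component G t j (f false), x ≠ y ∧ ¬ G.Adj x y := by
  simp only [h.component_eq]
  intro x (hx : ReachIn ..) y (hy : ReachIn ..)
  refine ⟨?_, fun hxy ↦ h.not_reachIn ((hx.step hy.right_mem hxy).trans hy.symm)⟩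
  rintro rfl
  exact h.not_reachIn (hx.trans hy.symm)

theorem exists_not_endsP5 (h : MergedPair side t j v f) (hP : PFree G 9) (u : ℕ) :
    ∃ b, ¬ EndsP5 G (component G t j (f b)) u := by
  by_cases htrue : EndsP5 G (component G t j (f true)) u
  · exact ⟨false, hP.not_endsP5_of_endsP5 h.ne_and_not_adj htrue⟩
  · exact ⟨true, htrue⟩

end MergedPair

/-! ### Copies of `X_k` in the components -/

variable {r s z l : ℕ} {side}

theorem adj_of_not_endsP5 {f : ℕ} (hu : ¬ EndsP5 G (component G t i f) u)
    (hf : f ∈ presented G t i) (hug : ∃ g ∈ component G t i f, G.Adj u g)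
    (hz : z ∈ component G t i f) (hzu : side z ≠ side u) (hl : 1 ≤ l)
    (hzl : (algoCol G z).index = l + 1)
    (hq : ∀ q ∈ component G t i f, ¬ CompleteTo side q (component G t l z)) : G.Adj u z := by
  by_contra huz
  have hzt : z ∈ presented G t i := by
    rw [component_of_mem hf] at hz
    exact hz.right_mem
  have hsub : component G t l z ⊆ component G t i f :=
    component_subset hz le_rfl ((Nat.le_succ l).trans (hzl.ge.trans hzt.2))
  by_cases hq₀ : ∃ q₀ ∈ component G t l z, G.Adj u q₀
  · obtain ⟨q₀, hq₀, huq₀⟩ := hq₀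
    obtain ⟨q, hq₀q, huq, -, hzq⟩ := exists_adj_of_not_endsP5 side hu
      (fun w hw ↦ hsub (hq₀.trans hw)) huq₀ hq₀.symm
    have hqt : q ∈ presented G t l := mem_presented_of_mem_component (hq₀.trans hq₀q)
      fun h ↦ huz (h ▸ huq)
    obtain ⟨f', hpair⟩ := exists_mergedPair side hl hzl hzt.1.le
    have hreach (b : Bool) : ReachIn G (presented G t l) (f' b) q := by
      obtain ⟨g, hzg, hg⟩ := hpair.exists_adj b
      have hgE : g ∈ component G t i f := hsub <|
        (hpair.mem_component b).trans (hg.mono (Set.subset_insert z _))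
      exact hg.step hqt (hzq hzu g hgE hzg).symm
    exact hpair.not_reachIn ((hreach true).trans (hreach false).symm)
  · obtain ⟨g, hg, hug⟩ := hug
    obtain ⟨q, hgq, huq, -, hzq⟩ := exists_adj_of_not_endsP5 side hu
      (fun w hw ↦ hg.trans hw) hug (hg.symm.trans hz)
    exact hq q (hg.trans hgq) <| completeTo_of_not_endsP5 side hu (hg.trans hgq) huq
      (fun x hx ↦ ⟨hsub hx, fun hux ↦ hq₀ ⟨x, hx, hux⟩⟩) hzu (hzq hzu)

theorem containsX_of_completeTo (hj : 1 ≤ j) (hu : (algoCol G u).index = j + 1) (hut : u ≤ t)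
    (hr : CompleteTo side r (component G t j u))
    (ih : ∀ x, algoCol G x = .a j → ContainsX side (component G x j x) (s + 1) (side x)) :
    ContainsX side (insert r (component G t j u)) (s + 2) (side r) := by
  obtain ⟨f, hpair⟩ := exists_mergedPair side hj hu hut
  have hsub (b : Bool) : component G t j (f b) ⊆ component G t j u :=
    hpair.component_subset_component le_rfl b
  refine .join (S := fun b ↦ component G t j (f b)) (fun b ↦ ?_)
    (fun x hx y hy ↦ (hpair.ne_and_not_adj x hx y hy).2) (fun b ↦ hr.mono (hsub b))
    (fun b ↦ (hsub b).trans (Set.subset_insert r _)) (Set.mem_insert r _)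
  have hX := (ih (f b) (hpair.color b)).mono
    (component_subset (mem_component_self G t j (f b)) ((hpair.lt b).le.trans hut) le_rfl)
  rwa [hpair.side_eq] at hX

/-- The vertices of `C_i[u]` at time `t` that have a color `a_j` whose index `j` is at least the
threshold for `m`. -/
def highPart (G : SimpleGraph ℕ) (m t i u : ℕ) : Set ℕ :=
  {z ∈ component G t i u | ∃ j : ℕ, threshold m ≤ j ∧ algoCol G z = .a j}

theorem highPart_subset (h : component G t i u ⊆ component G t' i' v) :
    highPart G m t i u ⊆ highPart G m t' i' v := fun _ hz ↦ ⟨h hz.1, hz.2⟩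

theorem mem_highPart_self (h : algoCol G u = .a j) (hj : threshold m ≤ j) :
    u ∈ highPart G m t i u := ⟨mem_component_self G t i u, j, hj, h⟩

theorem exists_eq_add_three_of_threshold_add_two_le (h : threshold m + 2 ≤ j) :
    ∃ l, j = l + 3 ∧ 1 ≤ l := by
  have : (3 : ℝ) < j := by linarith [one_lt_threshold m]
  have : 3 < j := by exact_mod_cast this
  exact ⟨j - 3, by omega, by omega⟩

theorem adj_of_mem_highPart {f : ℕ} (hu : ¬ EndsP5 G (component G t i f) u)
    (hf : f ∈ presented G t i) (hug : ∃ g ∈ component G t i f, G.Adj u g)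
    (hq : ∀ q ∈ component G t i f, ∀ z ∈ component G t i f, ∀ l,
      algoCol G z = .a (l + 1) → threshold m ≤ (l + 1 : ℕ) →
      ¬ CompleteTo side q (component G t l z))
    (hz : z ∈ highPart G m t i f) (hzu : side z ≠ side u) : G.Adj u z := by
  obtain ⟨hz, j, hj, hzj⟩ := hz
  obtain ⟨l, rfl⟩ : ∃ l, j = l + 1 := Nat.exists_eq_add_one.2 <| by
    exact_mod_cast zero_lt_one.trans ((one_lt_threshold m).trans_le hj)
  exact adj_of_not_endsP5 hu hf hug hz hzu (one_le_of_threshold_le hj)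
    (congrArg PalColor.index hzj) fun q hqf ↦ hq q hqf z hz l hzj hj

theorem containsX_of_forall_not_completeTo (hP : PFree G 9)
    (hno : ∀ q ∈ component G x m x, ∀ z ∈ component G x m x, z < x → ∀ j,
      algoCol G z = .a (j + 1) → threshold m ≤ (j + 1 : ℕ) →
      ¬ CompleteTo side q (component G x j z)) (r : ℕ) :
    ∀ u ∈ component G x m x, ∀ j ≤ m, algoCol G u = .a j → threshold m + 2 * r ≤ j →
      ContainsX side (highPart G m x j u) (r + 1) (side u) := by
  induction r with
  | zero =>
    intro u _ j _ huj hj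
    exact .of_le_one le_rfl (mem_highPart_self huj (by simpa using hj))
  | succ r ih =>
    intro u hu j hjm huj hj
    push_cast at hj
    obtain ⟨l, rfl, hl⟩ := exists_eq_add_three_of_threshold_add_two_le (m := m) (j := j)
      (by linarith [r.cast_nonneg (α := ℝ)])
    have hux : u ≤ x := le_of_mem_component hu
    obtain ⟨f, hpair⟩ := exists_mergedPair side (by omega) (congrArg PalColor.index huj) hux
    obtain ⟨b, hb⟩ := hpair.exists_not_endsP5 hP u
    obtain ⟨g, hug, hfg⟩ := hpair.exists_adj b
    obtain ⟨f', hpair'⟩ := exists_mergedPair side (j := l + 1) (by omega)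
      (congrArg PalColor.index (hpair.color b)) ((hpair.lt b).le.trans hux)
    have hS (c) : component G x (l + 1) (f' c) ⊆ component G x (l + 2) (f b) :=
      hpair'.component_subset_component (by omega) c
    have hfu : component G x (l + 2) (f b) ⊆ component G x (l + 3) u :=
      hpair.component_subset_component (by omega) b
    have hfx := hfu.trans (component_subset hu le_rfl hjm)
    refine .join (S := fun c ↦ highPart G m x (l + 1) (f' c)) (fun c ↦ ?_)
      (fun y hy z hz ↦ (hpair'.ne_and_not_adj y hy.1 z hz.1).2) (fun c z hz hzu ↦ ?_)
      (fun c ↦ highPart_subset ((hS c).trans hfu))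
      (mem_highPart_self huj (by linarith [r.cast_nonneg (α := ℝ)]))
    · have hX := ih (f' c) (hfx (hS c (mem_component_self ..))) (l + 1) (by omega) (hpair'.color c)
        (by push_cast at hj ⊢; linarith)
      rwa [hpair'.side_eq] at hX
    · refine adj_of_mem_highPart hb (hpair.mem_presented b)
        ⟨g, (hpair.component_eq b).symm ▸ hfg, hug⟩ (fun q hq z hz ↦ hno q (hfx hq) z (hfx hz) ?_)
        (highPart_subset (hS c) hz) hzu
      rw [hpair.component_eq] at hz
      exact hz.right_mem.1

theorem two_mul_le_sqrt (h : 2 * s ^ 2 ≤ m) : (2 * s : ℝ) ≤ √(2 * m) := by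
  have : (2 * s ^ 2 : ℝ) ≤ m := by exact_mod_cast h
  exact Real.le_sqrt_of_sq_le (by linarith)

theorem two_mul_sq_le_of_threshold_le (h : 2 * (s + 1) ^ 2 ≤ m)
    (hj : threshold m ≤ (j + 1 : ℕ)) : 2 * s ^ 2 ≤ j := by
  have hsqrt := two_mul_le_sqrt h
  have hsq := Real.sq_sqrt (show (0 : ℝ) ≤ 2 * m by positivity)
  unfold threshold at hj
  push_cast at hj hsqrt
  have : (2 * s ^ 2 : ℝ) ≤ j := by nlinarith [s.cast_nonneg (α := ℝ)]
  exact_mod_cast this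

theorem containsX_of_thirdRule (ht : ThirdRule side t m) (hm : 2 * (s + 2) ^ 2 ≤ m)
    (ih : ∀ x j, algoCol G x = .a j → 2 * (s + 1) ^ 2 ≤ j →
      ContainsX side (component G x j x) (s + 1) (side x)) :
    ContainsX side (component G t m t) (s + 2) (!side t) := by
  obtain ⟨u, hu, u', hu', j, hut, huj, hj, hcomplete⟩ := ht
  have hjm : j + 1 ≤ m :=
    huj.index_eq.ge.trans (mem_presented_of_mem_component hu hut.ne).2
  rw [← Bool.eq_not.2 hu'.2]
  refine (containsX_of_completeTo (one_le_of_threshold_le hj) huj.index_eq hut.le hcomplete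
    fun x hx ↦ ih x j hx (two_mul_sq_le_of_threshold_le hm hj)).mono ?_
  exact Set.insert_subset hu'.1 (component_subset hu le_rfl (by omega))

theorem containsX_of_a (hP : PFree G 9) (s : ℕ) : ∀ x m, algoCol G x = .a m → 2 * s ^ 2 ≤ m →
    ContainsX side (component G x m x) s (side x) := by
  induction s with
  | zero => exact fun x m _ _ ↦ .of_le_one zero_le_one (mem_component_self G x m x)
  | succ s ih =>
    intro x m hx hm
    rcases s with _ | s
    · exact .of_le_one le_rfl (mem_component_self G x m x)
    rcases exists_c_or_not_thirdRule side hx with ⟨z, hz, hzm⟩ | hthird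
    · rw [Bool.eq_not.2 hz.2.symm]
      exact (containsX_of_thirdRule (thirdRule_of_c side hzm) hm ih).mono
        (component_subset hz.1 (lt_of_mem_oppSide hz).le le_rfl)
    by_cases hno : ∀ q ∈ component G x m x, ∀ z ∈ component G x m x, z < x → ∀ j,
      algoCol G z = .a (j + 1) → threshold m ≤ (j + 1 : ℕ) →
      ¬ CompleteTo side q (component G x j z)
    · have hthreshold : threshold m + 2 * (s + 1 : ℕ) ≤ m := by
        have := two_mul_le_sqrt hm
        unfold threshold
        push_cast at this ⊢
        linarith
      exact (containsX_of_forall_not_completeTo hP hno (s + 1) x (mem_component_self G x m x) m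
        le_rfl hx hthreshold).mono fun z hz ↦ hz.1
    · push Not at hno
      obtain ⟨q, hq, z, hz, hzx, j, hzj, hj, hqz⟩ := hno
      have hqx : side q = side x := by
        by_contra hqx
        exact hthird ⟨z, hz, q, ⟨hq, hqx⟩, j, hzx, .inl hzj, hj, hqz⟩
      have hjm : j + 1 ≤ m :=
        (congrArg PalColor.index hzj).ge.trans (mem_presented_of_mem_component hz hzx.ne).2
      rw [← hqx]
      refine (containsX_of_completeTo (one_le_of_threshold_le hj) (congrArg PalColor.index hzj)
        hzx.le hqz fun y hy ↦ ih y j hy (two_mul_sq_le_of_threshold_le hm hj)).mono ?_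
      exact Set.insert_subset hq (component_subset hz le_rfl (by omega))

theorem exists_embedding_le {k : ℕ} (hP : PFree G 9) (side : G.Coloring Bool)
    (hv : (algoCol G v).index = k) (hs : 2 * s ^ 2 ≤ k) :
    ∃ f : XGraph s ↪g G, ∀ a, f a ≤ v := by
  suffices ∃ u ≤ v, ∃ i b, ContainsX side (component G u i u) s b by
    obtain ⟨u, hu, i, b, f, hf⟩ := this
    exact ⟨f, fun a ↦ (le_of_mem_component (hf a).1).trans hu⟩
  have ih := containsX_of_a (side := side) hP
  rcases hvc : algoCol G v with m | m | m <;>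
    obtain rfl : m = k := by simpa [hvc, PalColor.index] using hv
  · exact ⟨v, le_rfl, m, _, ih s v m hvc hs⟩
  · obtain ⟨x, hx, hxm⟩ := exists_a_of_b side hvc
    exact ⟨x, hx.le, m, _, ih s x m hxm hs⟩
  · rcases s with _ | _ | s
    · exact ⟨v, le_rfl, m, _, .of_le_one zero_le_one (mem_component_self G v m v)⟩
    · exact ⟨v, le_rfl, m, _, .of_le_one le_rfl (mem_component_self G v m v)⟩
    · exact ⟨v, le_rfl, m, _, containsX_of_thirdRule (thirdRule_of_c side hvc) hs (ih (s + 1))⟩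

end Bipartite

end Algorithm

/-! ### Forcing on-line algorithms to use many colors -/

section Online

open Finset

variable {A : OnlineAlg} {k n i : ℕ}

/-- The color that `A` gives to the vertex `i` when the vertices of `H` are presented in the order
`0, 1, 2, …`. -/
def onlineColor (A : OnlineAlg) (H : SimpleGraph ℕ) (i : ℕ) : ℕ :=
  A i (H.comap Fin.val)

theorem onlineColor_congr {H H' : SimpleGraph ℕ}
    (h : ∀ a ≤ i, ∀ b ≤ i, (H.Adj a b ↔ H'.Adj a b)) : onlineColor A H i = onlineColor A H' i := by
  refine congrArg (A i) ?_
  ext a b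
  exact h a a.is_le b b.is_le

theorem IsProperAlg.onlineColor_ne (hA : IsProperAlg A) {H : SimpleGraph ℕ} {a b : ℕ}
    (h : H.Adj a b) : onlineColor A H a ≠ onlineColor A H b :=
  hA (max a b + 1) (H.comap Fin.val) ⟨a, by omega⟩ ⟨b, by omega⟩ h

/-- The colors that `A` gives to the vertices on side `b` of a copy `f` of `X_k` in `H`. -/
def sideColors (A : OnlineAlg) (H : SimpleGraph ℕ) (f : XV k → ℕ) (b : Bool) : Finset ℕ :=
  image (fun a ↦ onlineColor A H (f a)) {a | XSide k a = b}

theorem mem_sideColors {H : SimpleGraph ℕ} {f : XV k → ℕ} {b : Bool} {c : ℕ} :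
    c ∈ sideColors A H f b ↔ ∃ a, XSide k a = b ∧ onlineColor A H (f a) = c := by
  simp only [sideColors, mem_image, mem_filter_univ]

theorem sideColors_elim_false {H : SimpleGraph ℕ} (r : ℕ) (f g : XV (n + 2) → ℕ) :
    sideColors A H (XV.elim r f g) false =
      sideColors A H f true ∪ sideColors A H g false := by
  ext c
  simp only [mem_union, mem_sideColors, XV.exists_iff, XSide_XRoot, XSide_inl, XSide_inr,
    Bool.not_eq_false', reduceCtorEq, false_and, false_or]
  rfl

theorem subset_sideColors_elim_true {H : SimpleGraph ℕ} (r : ℕ) (f g : XV (n + 2) → ℕ) :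
    sideColors A H f false ∪ sideColors A H g true ⊆
      sideColors A H (XV.elim r f g) true := by
  intro c
  simp only [mem_union, mem_sideColors, XV.exists_iff, XSide_XRoot, XSide_inl, XSide_inr,
    Bool.not_eq_true', true_and]
  exact .inr

theorem onlineColor_root_mem_sideColors (A : OnlineAlg) (H : SimpleGraph ℕ) (f : XV k → ℕ) :
    onlineColor A H (f (XRoot k)) ∈ sideColors A H f true :=
  mem_sideColors.2 ⟨_, XSide_XRoot k, rfl⟩

theorem IsProperAlg.onlineColor_root_notMem_sideColors (hA : IsProperAlg A) {H : SimpleGraph ℕ}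
    (f : XGraph (n + 2) ↪g H) :
    onlineColor A H (f (XRoot (n + 2))) ∉ sideColors A H f false := by
  intro h
  obtain ⟨a, ha, hc⟩ := mem_sideColors.1 h
  exact hA.onlineColor_ne (f.map_adj_iff.2 (XGraph.adj_root_of_XSide_eq_false n ha)) hc.symm

/-- A stage of the game between an adversary and an on-line algorithm: the vertices
`0, …, size - 1` have been presented. -/
structure History where
  /-- The number of vertices presented so far. -/
  size : ℕ
  /-- The graph presented so far. -/
  graph : SimpleGraph ℕ
  lt_size ⦃a b : ℕ⦄ : graph.Adj a b → a < size

namespace History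

/-- `P` is an earlier stage of the game than `Q`. -/
structure IsPrefix (P Q : History) : Prop where
  size_le : P.size ≤ Q.size
  adj_iff ⦃a b : ℕ⦄ : a < P.size → b < P.size → (Q.graph.Adj a b ↔ P.graph.Adj a b)

/-- `Q` arises from `P` by presenting vertices that are not adjacent to those of `P`. -/
structure IsExtension (P Q : History) : Prop extends IsPrefix P Q where
  not_adj ⦃a b : ℕ⦄ : a < P.size → P.size ≤ b → ¬ Q.graph.Adj a b

variable {P Q R : History}

theorem IsPrefix.trans (h : P.IsPrefix Q) (h' : Q.IsPrefix R) : P.IsPrefix R where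
  size_le := h.size_le.trans h'.size_le
  adj_iff _ _ ha hb := (h'.adj_iff (ha.trans_le h.size_le) (hb.trans_le h.size_le)).trans
    (h.adj_iff ha hb)

theorem IsExtension.refl (P : History) : P.IsExtension P where
  size_le := le_rfl
  adj_iff _ _ _ _ := Iff.rfl
  not_adj _ _ _ hb hab := (P.lt_size hab.symm).not_ge hb

theorem IsExtension.trans (h : P.IsExtension Q) (h' : Q.IsExtension R) : P.IsExtension R where
  toIsPrefix := h.toIsPrefix.trans h'.toIsPrefix
  not_adj a b ha hb hab := by
    have haQ := ha.trans_le h.size_le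
    rcases lt_or_ge b Q.size with hbQ | hbQ
    · exact h.not_adj ha hb ((h'.adj_iff haQ hbQ).1 hab)
    · exact h'.not_adj haQ hbQ hab

namespace IsPrefix

variable {f : XGraph k ↪g P.graph}

/-- A copy of `X_k` in an earlier stage of the game, regarded as a copy in a later stage. -/
def lift (h : P.IsPrefix Q) (f : XGraph k ↪g P.graph) (hf : ∀ a, f a < P.size) :
    XGraph k ↪g Q.graph where
  toFun := f
  inj' := f.injective
  map_rel_iff' := (h.adj_iff (hf _) (hf _)).trans f.map_adj_iff

theorem sideColors_lift (h : P.IsPrefix Q) (hf : ∀ a, f a < P.size) (b : Bool) :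
    sideColors A Q.graph (h.lift f hf) b = sideColors A P.graph f b :=
  Finset.image_congr fun a _ ↦ onlineColor_congr fun _ hx _ hy ↦
    h.adj_iff (hx.trans_lt (hf a)) (hy.trans_lt (hf a))

end IsPrefix

/-- The stage reached from `P` by presenting a vertex adjacent to the vertices of `W` (those members
of `W` that have not been presented are ignored). -/
def addVertex (P : History) (W : Set ℕ) : History where
  size := P.size + 1
  graph := P.graph ⊔ SimpleGraph.fromRel fun a b ↦ a = P.size ∧ b ∈ W ∧ b < P.size
  lt_size a b := by
    rintro (h | ⟨-, ⟨rfl, -⟩ | ⟨-, -, h⟩⟩)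
    exacts [(P.lt_size h).trans_le P.size.le_succ, P.size.lt_succ_self, h.trans_le P.size.le_succ]

theorem adj_addVertex_of_lt {W : Set ℕ} {a b : ℕ} (ha : a < P.size) :
    (P.addVertex W).graph.Adj a b ↔ P.graph.Adj a b ∨ b = P.size ∧ a ∈ W := by
  simp only [addVertex, SimpleGraph.sup_adj, SimpleGraph.fromRel_adj]
  grind

theorem adj_addVertex_size {W : Set ℕ} {b : ℕ} :
    (P.addVertex W).graph.Adj P.size b ↔ b ∈ W ∧ b < P.size := by
  have := P.lt_size (a := P.size) (b := b)
  simp only [addVertex, SimpleGraph.sup_adj, SimpleGraph.fromRel_adj]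
  grind

theorem isPrefix_addVertex (P : History) (W : Set ℕ) : P.IsPrefix (P.addVertex W) where
  size_le := P.size.le_succ
  adj_iff _ _ ha hb := (adj_addVertex_of_lt ha).trans (or_iff_left fun h ↦ hb.ne h.1)

theorem IsExtension.addVertex (h : P.IsExtension Q) {W : Set ℕ} (hW : ∀ w ∈ W, P.size ≤ w) :
    P.IsExtension (Q.addVertex W) where
  toIsPrefix := h.toIsPrefix.trans (isPrefix_addVertex Q W)
  not_adj a b ha hb hab := by
    rcases (adj_addVertex_of_lt (ha.trans_le h.size_le)).1 hab with hab | ⟨-, haW⟩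
    · exact h.not_adj ha hb hab
    · exact (hW a haW).not_gt ha

end History

/-- The vertices presented between the stages `P` and `Q` form a copy of `X_k`, not adjacent to the
vertices of `P`. -/
structure Block (k : ℕ) (P Q : History) where
  isExtension : P.IsExtension Q
  /-- The copy of `X_k`. -/
  emb : XGraph k ↪g Q.graph
  range_emb : Set.range emb = Set.Ico P.size Q.size

/-- The vertices presented between the stages `P` and `Q` form two copies of `X_k`, not adjacent to
each other nor to the vertices of `P`. -/
structure BlockPair (k : ℕ) (P Q : History) where
  isExtension : P.IsExtension Q
  /-- The first copy of `X_k`. -/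
  left : XGraph k ↪g Q.graph
  /-- The second copy of `X_k`. -/
  right : XGraph k ↪g Q.graph
  range_union : Set.range left ∪ Set.range right = Set.Ico P.size Q.size
  not_adj (x y : XV k) : ¬ Q.graph.Adj (left x) (right y)

variable {P Q R : History}

namespace Block

/-- The colors that `A` gives to side `b` of the copy of `X_k`. -/
def colors (A : OnlineAlg) (B : Block k P Q) (b : Bool) : Finset ℕ :=
  sideColors A Q.graph B.emb b

theorem le_emb_and_emb_lt (B : Block k P Q) (a : XV k) : P.size ≤ B.emb a ∧ B.emb a < Q.size :=
  B.range_emb.subset ⟨a, rfl⟩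

/-- Two successive copies of `X_k`. -/
def pair (B : Block k P Q) (C : Block k Q R) : BlockPair k P R where
  isExtension := B.isExtension.trans C.isExtension
  left := C.isExtension.lift B.emb fun a ↦ (B.le_emb_and_emb_lt a).2
  right := C.emb
  range_union := (congrArg₂ _ B.range_emb C.range_emb).trans <|
    Set.Ico_union_Ico_eq_Ico B.isExtension.size_le C.isExtension.size_le
  not_adj x y := C.isExtension.not_adj (B.le_emb_and_emb_lt x).2 (C.le_emb_and_emb_lt y).1

end Block

namespace BlockPair

/-- The same two copies of `X_k`, listed in the other order. -/
def swap (B : BlockPair k P Q) : BlockPair k P Q where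
  isExtension := B.isExtension
  left := B.right
  right := B.left
  range_union := (Set.union_comm _ _).trans B.range_union
  not_adj x y h := B.not_adj y x h.symm

/-- The colors that `A` gives to the vertices that a root joining the two copies is adjacent to. -/
def colors (A : OnlineAlg) (B : BlockPair k P Q) : Finset ℕ :=
  sideColors A Q.graph B.left true ∪ sideColors A Q.graph B.right false

theorem colors_pair (B : Block k P Q) (C : Block k Q R) :
    (B.pair C).colors A = B.colors A true ∪ C.colors A false :=
  congrArg (· ∪ _) (C.isExtension.sideColors_lift (fun a ↦ (B.le_emb_and_emb_lt a).2) true)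

theorem colors_swap_pair (B : Block k P Q) (C : Block k Q R) :
    (B.pair C).swap.colors A = C.colors A true ∪ B.colors A false :=
  congrArg (_ ∪ ·) (C.isExtension.sideColors_lift (fun a ↦ (B.le_emb_and_emb_lt a).2) false)

theorem le_left_and_left_lt (B : BlockPair k P Q) (a : XV k) :
    P.size ≤ B.left a ∧ B.left a < Q.size :=
  B.range_union.subset (.inl ⟨a, rfl⟩)

theorem le_right_and_right_lt (B : BlockPair k P Q) (a : XV k) :
    P.size ≤ B.right a ∧ B.right a < Q.size :=
  B.range_union.subset (.inr ⟨a, rfl⟩)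

/-- The vertices that a root joining the two copies is adjacent to. -/
def rootNeighbors (B : BlockPair k P Q) : Set ℕ :=
  B.left '' {x | XSide k x = true} ∪ B.right '' {x | XSide k x = false}

theorem left_ne_right (B : BlockPair (n + 2) P Q) (x y : XV (n + 2)) : B.left x ≠ B.right y := by
  obtain ⟨x', hx'⟩ := XGraph.exists_adj n x
  exact fun h ↦ B.not_adj x' y (h ▸ (B.left.map_adj_iff.2 hx').symm)

theorem left_mem_rootNeighbors (B : BlockPair (n + 2) P Q) {x : XV (n + 2)} :
    B.left x ∈ B.rootNeighbors ↔ XSide (n + 2) x = true := by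
  refine ⟨?_, fun hx ↦ .inl ⟨x, hx, rfl⟩⟩
  rintro (⟨y, hy, h⟩ | ⟨y, -, h⟩)
  · exact B.left.injective h ▸ hy
  · exact (B.left_ne_right x y h.symm).elim

theorem right_mem_rootNeighbors (B : BlockPair (n + 2) P Q) {x : XV (n + 2)} :
    B.right x ∈ B.rootNeighbors ↔ XSide (n + 2) x = false := by
  refine ⟨?_, fun hx ↦ .inr ⟨x, hx, rfl⟩⟩
  rintro (⟨y, -, h⟩ | ⟨y, hy, h⟩)
  · exact (B.left_ne_right y x h).elim
  · exact B.right.injective h ▸ hy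

/-- The copy of `X_{k+1}` obtained by presenting a root joining the two copies of `X_k`. -/
def join (B : BlockPair (n + 2) P Q) : Block (n + 3) P (Q.addVertex B.rootNeighbors) where
  isExtension := B.isExtension.addVertex <| by
    rintro _ (⟨x, -, rfl⟩ | ⟨x, -, rfl⟩)
    exacts [(B.le_left_and_left_lt x).1, (B.le_right_and_right_lt x).1]
  emb := XGraph.joinEmbedding Q.size
    ((Q.isPrefix_addVertex _).lift B.left fun a ↦ (B.le_left_and_left_lt a).2)
    ((Q.isPrefix_addVertex _).lift B.right fun a ↦ (B.le_right_and_right_lt a).2)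
    (fun x ↦ History.adj_addVertex_size.trans <|
      (and_iff_left (B.le_left_and_left_lt x).2).trans B.left_mem_rootNeighbors)
    (fun x ↦ History.adj_addVertex_size.trans <|
      (and_iff_left (B.le_right_and_right_lt x).2).trans B.right_mem_rootNeighbors)
    (fun x y h ↦ B.not_adj x y <| ((Q.isPrefix_addVertex _).adj_iff (B.le_left_and_left_lt x).2
      (B.le_right_and_right_lt y).2).1 h)
  range_emb := by
    refine (XV.range_elim ..).trans ((congrArg (insert Q.size) B.range_union).trans ?_)
    exact Set.insert_Ico_right_eq_Ico_add_one B.isExtension.size_le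

theorem colors_join_false (B : BlockPair (n + 2) P Q) : B.join.colors A false = B.colors A :=
  (sideColors_elim_false ..).trans <|
    congrArg₂ _ (History.IsPrefix.sideColors_lift ..) (History.IsPrefix.sideColors_lift ..)

theorem colors_swap_subset_colors_join_true (B : BlockPair (n + 2) P Q) :
    B.swap.colors A ⊆ B.join.colors A true := by
  refine .trans (Eq.subset ?_) (subset_sideColors_elim_true ..)
  rw [union_comm]
  exact (congrArg₂ _ (History.IsPrefix.sideColors_lift ..)
    (History.IsPrefix.sideColors_lift ..)).symm

end BlockPair

theorem History.exists_isExtension_adj (P : History) :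
    ∃ Q x y, P.IsExtension Q ∧ Q.graph.Adj x y ∧ {x, y} = Set.Ico P.size Q.size := by
  refine ⟨(P.addVertex ∅).addVertex {P.size}, P.size + 1, P.size,
    ((IsExtension.refl P).addVertex fun _ hw ↦ hw.elim).addVertex fun _ hw ↦
      (Set.mem_singleton_iff.1 hw).ge,
    adj_addVertex_size.2 ⟨rfl, P.size.lt_succ_self⟩, ?_⟩
  ext i
  change i = P.size + 1 ∨ i = P.size ↔ P.size ≤ i ∧ i < P.size + 1 + 1
  omega

namespace Block

/-- The copy of `X_2` formed by two new adjacent vertices, the first one being the root. -/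
def edge {x y : ℕ} (hPQ : P.IsExtension Q) (hxy : Q.graph.Adj x y)
    (hIco : {x, y} = Set.Ico P.size Q.size) : Block 2 P Q where
  isExtension := hPQ
  emb := XGraph.edgeEmbedding hxy
  range_emb := by
    rw [← hIco, Set.pair_comm]
    exact Bool.range_eq _

theorem onlineColor_root_mem_colors (A : OnlineAlg) (B : Block k P Q) :
    onlineColor A Q.graph (B.emb (XRoot k)) ∈ B.colors A true :=
  onlineColor_root_mem_sideColors A Q.graph B.emb

end Block

/-- The adversary can at any stage force at least `k - 1` colors on the non-root side of a new copy
of `X_k`. -/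
def ForcesNonRoot (A : OnlineAlg) (k : ℕ) : Prop :=
  ∀ P, ∃ Q, ∃ B : Block k P Q, k ≤ #(B.colors A false) + 1

/-- For every set `S` of `k - 1` colors, the adversary can at any stage present a new copy of `X_k`
with a color outside `S` on the root side or exactly the colors `S` on the non-root side. -/
def ForcesAgainst (A : OnlineAlg) (k : ℕ) : Prop :=
  ∀ S : Finset ℕ, #S + 1 = k → ∀ P, ∃ Q, ∃ B : Block k P Q,
    (∃ c ∈ B.colors A true, c ∉ S) ∨ B.colors A false = S

/-- The adversary can at any stage present two new copies of `X_k` such that the vertices that a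
root joining them is adjacent to have at least `k` colors. -/
def ForcesPair (A : OnlineAlg) (k : ℕ) : Prop :=
  ∀ P, ∃ Q, ∃ B : BlockPair k P Q, k ≤ #(B.colors A)

theorem forcesNonRoot_two (A : OnlineAlg) : ForcesNonRoot A 2 := by
  intro P
  obtain ⟨Q, x, y, hPQ, hxy, hIco⟩ := P.exists_isExtension_adj
  exact ⟨Q, .edge hPQ hxy hIco, Nat.succ_le_succ <|
    card_pos.2 ⟨_, mem_sideColors.2 ⟨false, rfl, rfl⟩⟩⟩

theorem forcesAgainst_two (hA : IsProperAlg A) : ForcesAgainst A 2 := by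
  intro S hS P
  obtain ⟨c, rfl⟩ := card_eq_one.1 (Nat.succ_injective hS)
  obtain ⟨Q, x, y, hPQ, hxy, hIco⟩ := P.exists_isExtension_adj
  refine ⟨Q, ?_⟩
  simp only [notMem_singleton]
  by_cases hx : onlineColor A Q.graph x = c
  · exact ⟨.edge hPQ hxy.symm ((Set.pair_comm y x).trans hIco), .inl
      ⟨_, Block.onlineColor_root_mem_colors A _, hx ▸ hA.onlineColor_ne hxy.symm⟩⟩
  · exact ⟨.edge hPQ hxy hIco, .inl ⟨_, Block.onlineColor_root_mem_colors A _, hx⟩⟩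

theorem ForcesNonRoot.forcesPair (hA : IsProperAlg A) (h : ForcesNonRoot A (n + 2))
    (h' : ForcesAgainst A (n + 2)) : ForcesPair A (n + 2) := by
  intro P
  obtain ⟨Q, B, hB⟩ := h P
  by_cases hcard : n + 2 ≤ #(B.colors A false)
  · obtain ⟨R, C, -⟩ := h Q
    refine ⟨R, (B.pair C).swap, ?_⟩
    rw [BlockPair.colors_swap_pair]
    exact hcard.trans (card_le_card subset_union_right)
  have hcard_insert {c : ℕ} {T : Finset ℕ} (hc : c ∉ B.colors A false) (hcT : c ∈ T) :
      n + 2 ≤ #(T ∪ B.colors A false) := by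
    refine hB.trans ((card_insert_of_notMem hc).ge.trans (card_le_card ?_))
    exact insert_subset (mem_union_left _ hcT) subset_union_right
  obtain ⟨R, C, ⟨c, hcC, hcB⟩ | hCB⟩ := h' (B.colors A false) (by omega) Q
  · refine ⟨R, (B.pair C).swap, ?_⟩
    rw [BlockPair.colors_swap_pair]
    exact hcard_insert hcB hcC
  · refine ⟨R, B.pair C, ?_⟩
    rw [BlockPair.colors_pair, hCB]
    exact hcard_insert (hA.onlineColor_root_notMem_sideColors B.emb)
      (B.onlineColor_root_mem_colors A)

theorem ForcesPair.forcesNonRoot_succ (h : ForcesPair A (n + 2)) : ForcesNonRoot A (n + 3) := by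
  intro P
  obtain ⟨Q, B, hB⟩ := h P
  exact ⟨_, B.join, Nat.succ_le_succ (hB.trans_eq (congrArg card B.colors_join_false.symm))⟩

theorem ForcesPair.forcesAgainst_succ (h : ForcesPair A (n + 2)) : ForcesAgainst A (n + 3) := by
  intro S hS P
  obtain ⟨Q, B, hB⟩ := h P
  by_cases hBS : B.colors A ⊆ S
  · refine ⟨_, B.join, .inr (B.colors_join_false.trans (eq_of_subset_of_card_le hBS ?_))⟩
    omega
  · obtain ⟨c, hc, hcS⟩ := not_subset.1 hBS
    exact ⟨_, B.swap.join, .inl ⟨c, B.swap.colors_swap_subset_colors_join_true hc, hcS⟩⟩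

theorem forcesNonRoot_and_forcesAgainst (hA : IsProperAlg A) (n : ℕ) :
    ForcesNonRoot A (n + 2) ∧ ForcesAgainst A (n + 2) := by
  induction n with
  | zero => exact ⟨forcesNonRoot_two A, forcesAgainst_two hA⟩
  | succ n ih =>
    have hpair := ih.1.forcesPair hA ih.2
    exact ⟨hpair.forcesNonRoot_succ, hpair.forcesAgainst_succ⟩

variable {V : Type} [Fintype V] {G : SimpleGraph V}

theorem exists_equiv_runColor_eq (A : OnlineAlg) {H : SimpleGraph ℕ} {m : ℕ}
    (f : H.comap (Fin.val : Fin m → ℕ) ↪g G) : ∃ π : Fin (Fintype.card V) ≃ V,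
      ∀ i < m, ∃ j, runColor A (G.comap π) j = onlineColor A H i := by
  have hm : m ≤ Fintype.card V := by simpa using Fintype.card_le_of_injective f f.injective
  have := Equiv.Perm.isMultiplyPretransitive V m
  obtain ⟨σ, hσ⟩ := MulAction.exists_smul_eq (Equiv.Perm V)
    ((Fin.castLEEmb hm).trans (Fintype.equivFin V).symm.toEmbedding) f.toEmbedding
  have hσ' (i : Fin m) : σ ((Fintype.equivFin V).symm (Fin.castLE hm i)) = f i :=
    DFunLike.congr_fun hσ i
  refine ⟨(Fintype.equivFin V).symm.trans σ, fun i hi ↦ ⟨⟨i, hi.trans_le hm⟩, ?_⟩⟩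
  refine congrArg (A i) ?_
  ext a b
  have ha := hσ' ⟨a, a.is_le.trans_lt hi⟩
  have hb := hσ' ⟨b, b.is_le.trans_lt hi⟩
  exact (iff_of_eq (congrArg₂ G.Adj ha hb)).trans f.map_adj_iff

theorem exists_le_numColors (hA : IsProperAlg A) (f : XGraph (n + 2) ↪g G) :
    ∃ π : Fin (Fintype.card V) ≃ V, n + 2 ≤ numColors A (G.comap π) := by
  obtain ⟨Q, B, hB⟩ := (forcesNonRoot_and_forcesAgainst hA n).1 ⟨0, ⊥, nofun⟩
  have hrange {i : ℕ} : (∃ a, B.emb a = i) ↔ i < Q.size :=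
    (Set.ext_iff.1 B.range_emb i).trans (and_iff_right i.zero_le)
  choose g hg using fun i : Fin Q.size ↦ hrange.2 i.2
  have hgmap {i j} : (XGraph (n + 2)).Adj (g i) (g j) ↔ Q.graph.Adj i j := by
    rw [← B.emb.map_adj_iff, hg, hg]
  have hginj : Function.Injective g := fun i j h ↦ Fin.ext <| by rw [← hg, ← hg, h]
  obtain ⟨π, hπ⟩ := exists_equiv_runColor_eq A (H := Q.graph)
    (RelEmbedding.trans ⟨⟨g, hginj⟩, hgmap⟩ f)
  refine ⟨π, hB.trans ((card_insert_of_notMem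
    (hA.onlineColor_root_notMem_sideColors B.emb)).ge.trans (card_le_card ?_))⟩
  have hmem (a) : onlineColor A Q.graph (B.emb a) ∈ univ.image (runColor A (G.comap π)) := by
    obtain ⟨j, hj⟩ := hπ (B.emb a) (hrange.1 ⟨a, rfl⟩)
    exact mem_image.2 ⟨j, mem_univ j, hj⟩
  refine insert_subset (hmem _) fun c hc ↦ ?_
  obtain ⟨a, -, rfl⟩ := mem_sideColors.1 hc
  exact hmem a

theorem le_onlineChrom (f : XGraph k ↪g G) : k ≤ onlineChrom V G := by
  refine le_csInf ⟨Fintype.card V, fun k _ ↦ k, ?_, ?_⟩ ?_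
  · exact fun n H i j h hij ↦ h.ne (Fin.ext hij)
  · intro m π
    exact card_image_le.trans_eq (Fintype.card_congr π)
  rintro m ⟨A, hA, hm⟩
  rcases k with _ | _ | n
  · exact m.zero_le
  · have : Nonempty (Fin (Fintype.card V)) := ⟨Fintype.equivFin V (f (XRoot 1))⟩
    exact (card_pos.2 (univ_nonempty.image _)).trans_le (hm _ (Fintype.equivFin V).symm)
  · obtain ⟨π, hπ⟩ := exists_le_numColors hA f
    exact hπ.trans (hm _ π)

end Online

/-! ### The performance of Algorithm 1 -/

theorem card_le_three_mul_of_index_mem_Icc {T : Finset PalColor} {k : ℕ}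
    (h : ∀ c ∈ T, c.index ∈ Finset.Icc 1 k) : T.card ≤ 3 * k := by
  have hT : T ⊆ (Finset.Icc 1 k).biUnion fun i ↦ {.a i, .b i, .c i} := by
    intro c hc
    refine Finset.mem_biUnion.2 ⟨c.index, h c hc, ?_⟩
    cases c <;> simp [PalColor.index]
  calc T.card ≤ (Finset.Icc 1 k).card * 3 := (Finset.card_le_card hT).trans <|
        Finset.card_biUnion_le_card_mul _ _ _ fun _ _ ↦ Finset.card_le_three
    _ = 3 * k := by rw [Nat.card_Icc, Nat.add_sub_cancel, mul_comm]

theorem two_mul_floor_sqrt_half_sq_le (k : ℕ) : 2 * ⌊√((k : ℝ) / 2)⌋₊ ^ 2 ≤ k := by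
  have hfloor : (⌊√((k : ℝ) / 2)⌋₊ : ℝ) ^ 2 ≤ k / 2 :=
    (Real.le_sqrt (Nat.cast_nonneg _) (by positivity)).1 (Nat.floor_le (Real.sqrt_nonneg _))
  have : (2 * ⌊√((k : ℝ) / 2)⌋₊ ^ 2 : ℝ) ≤ k := by linarith
  exact_mod_cast this

theorem stmt13_general (G : SimpleGraph ℕ) (n : ℕ) (hP9 : PFree G 9)
    (hbip : ∃ side : ℕ → Bool, ∀ x y, G.Adj x y → side x ≠ side y) (k : ℕ)
    (hmax : ∃ v < n, (algoCol G v).index = k) (hbound : ∀ v < n, (algoCol G v).index ≤ k) :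
    ((Finset.range n).image (algoCol G)).card ≤ 3 * k ∧
    Nonempty (XGraph (⌊Real.sqrt ((k : ℝ) / 2)⌋₊) ↪g G) ∧
    ⌊Real.sqrt ((k : ℝ) / 2)⌋₊ ≤ onlineChrom (Fin n) (G.comap Fin.val) := by
  obtain ⟨side, hside⟩ := hbip
  obtain ⟨v, hvn, hv⟩ := hmax
  obtain ⟨f, hf⟩ := exists_embedding_le hP9 (.mk side (hside _ _)) hv
    (two_mul_floor_sqrt_half_sq_le k)
  refine ⟨card_le_three_mul_of_index_mem_Icc ?_, ⟨f⟩, le_onlineChrom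
    ⟨⟨fun a ↦ ⟨f a, (hf a).trans_lt hvn⟩, fun a b h ↦ f.injective (Fin.val_eq_of_eq h)⟩,
      f.map_adj_iff⟩⟩
  simp only [Finset.forall_mem_image, Finset.mem_range, Finset.mem_Icc]
  exact fun v hv ↦ ⟨one_le_index G v, hbound v hv⟩

theorem stmt13 (G : SimpleGraph ℕ) (n : ℕ) (hfin : ∀ i j, G.Adj i j → i < n ∧ j < n)
    (hP9 : PFree G 9)
    (hbip : ∃ side : ℕ → Bool, ∀ x y, G.Adj x y → side x ≠ side y)
    (k : ℕ) (hk : 2 ≤ k)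
    (hmax : ∃ v < n, (algoCol G v).index = k)
    (hbound : ∀ v < n, (algoCol G v).index ≤ k) :
    ((Finset.range n).image (algoCol G)).card ≤ 3 * k ∧
    Nonempty (XGraph (⌊Real.sqrt ((k : ℝ) / 2)⌋₊) ↪g G) ∧
    ⌊Real.sqrt ((k : ℝ) / 2)⌋₊ ≤ onlineChrom (Fin n) (G.comap Fin.val) :=
  stmt13_general G n hP9 hbip k hmax hbound
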